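/- Let F be a dyadic local field, i.e., a finite field extension of ℚ₂, with valuation ring O_F, normalized valuation ord and e = ord(2). Let b₁, b₂ ∈ F^× with 0 ≤ ord(b₁) ≤ ord(b₂). Then the diagonal binary lattice ⟨b₁, b₂⟩ is represented by I₄ over O_F (i.e., there exist u, v ∈ O_F⁴ with Σᵢ uᵢ² = b₁, Σᵢ vᵢ² = b₂ and Σᵢ uᵢvᵢ = 0) if and only if both of the following hold: (a) the binary quadratic space [b₁, b₂] is represented by the quaternary space [1,1,1,1] over F, i.e., there exist u, v ∈ F⁴ with Σᵢ uᵢ² = b₁, Σᵢ vᵢ² = b₂ and Σᵢ uᵢvᵢ = 0; and (b) d(−b₁) ≥ e − ord(b₁) and d(−b₁b₂) ≥ e − ord(b₂). -/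

import Mathlib

/-!
Condition (b) says exactly that `b₁` and `b₂` are squares of integers modulo `2`
(`defect_iff_sqMod`), which is clearly necessary since a sum of squares is congruent modulo `2`
to the square of the sum. For the converse two cases are distinguished.

If `-1` is a sum of two squares, the coordinates can be taken integral, and `I₄` splits as a
hyperbolic plane with the lines `⟨1⟩` and `⟨-1⟩`. Writing `b₁ = s² + 2α`, the vector with
coordinates `(1, α)` in the plane and `s` on the first line has norm `b₁`, and the vectors
orthogonal to it take the norms `r² + 2rx - b₁y²`. Solving `b₂ = r² + 2rx - b₁y²` in integers is a
congruence modulo `2r`, treated in `exists_r` for the normal form of `b₁`, `b₂` modulo `4`.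

If `-1` is not a sum of two squares, the residue field contains no primitive cube root of unity
and `e` is odd. The form `I₄` is then the norm form of a quaternion division algebra, and a vector
of norm `b₁` or `b₂` is integral as soon as its first coordinate is (`integral_of_sqMod`). So one
only has to move the given representation over `F` to one with integral real parts `a`, `-b`; this
amounts to solving `b₁ - a² - b² b₁ / b₂ = N (c² + b₁ b₂ d²)` with `a`, `b` integral, for a
prescribed `N ≠ 0` (`rep_of_norm_eq`). Put `D = -b₁b₂`. The norms from `F(√D)` have index at most
two in `F^×`. This is proved with an explicit representative `ν` of the other class by descent
along the unit filtration (`sep_of_levels`): norms fill every graded piece but one, where the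
obstruction is the cokernel of `z ↦ z² + z` on the residue field, generated by `1`. It then
suffices to find two points `(a, b)` where the left-hand side takes values of ratio `ν`, or, for
`D` a square times an element of `1 + 4O_F`, one value of even and one of odd order; they are
given by cases on the quadratic defects of `D` and `b₁`.
-/

/-- The order of relative quadratic defect of `c`, with respect to a normalized valuation
`ord` on a field `F` (the valuation ring being `{x | 0 ≤ ord x}`):
`d(c) = min { ord (c⁻¹ * z) | z ∈ ⋂_{x ∈ F} (c - x²)·O_F }`, which equals `⊤ = ∞` when the
intersection is the zero ideal. -/
noncomputable def quadDefect {F : Type*} [Field F] (ord : F → WithTop ℤ) (c : F) :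
    WithTop ℤ :=
  sInf {v : WithTop ℤ | ∃ z : F,
    (∀ x : F, ∃ t : F, 0 ≤ ord t ∧ z = (c - x ^ 2) * t) ∧ v = ord (c⁻¹ * z)}

/-- The diagonal binary lattice `⟨b₁, b₂⟩` is represented by `I_m` over the subring
`O ⊆ F`: there are `u, v ∈ O^m` with `Σ uᵢ² = b₁`, `Σ vᵢ² = b₂` and `Σ uᵢvᵢ = 0`. -/
def RepByIm {F : Type*} [Field F] (O : Set F) (m : ℕ) (b₁ b₂ : F) : Prop :=
  ∃ u v : Fin m → F, (∀ i, u i ∈ O) ∧ (∀ i, v i ∈ O) ∧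
    (∑ i, u i ^ 2) = b₁ ∧ (∑ i, v i ^ 2) = b₂ ∧ (∑ i, u i * v i) = 0

namespace RepI4

/-! ### Orders in a dyadic field -/

/-- The axioms of a normalized discrete valuation on a field in which `2` has order `e ≥ 1`. -/
structure DyadicVal {F : Type*} [Field F] (ord : F → WithTop ℤ) (e : ℤ) : Prop where
  top : ∀ x : F, ord x = ⊤ ↔ x = 0
  mul : ∀ x y : F, ord (x * y) = ord x + ord y
  add : ∀ x y : F, min (ord x) (ord y) ≤ ord (x + y)
  surj : ∀ n : ℤ, ∃ x : F, ord x = (n : WithTop ℤ)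
  two : ord 2 = (e : WithTop ℤ)
  epos : 1 ≤ e

/-- `Ge ord n x`: the order of `x` is at least `n`. -/
def Ge {F : Type*} (ord : F → WithTop ℤ) (n : ℤ) (x : F) : Prop := (n : WithTop ℤ) ≤ ord x

/-- `Ex ord n x`: the order of `x` is exactly the integer `n`. -/
def Ex {F : Type*} (ord : F → WithTop ℤ) (n : ℤ) (x : F) : Prop := ord x = (n : WithTop ℤ)

/-- The properties of a dyadic local field on which the argument rests: a normalized valuation,
perfectness of the residue field, the fact that `z ↦ z² + z` has image of index two on the residue
field (stated only when `1` is outside the image), and Hensel's lemma for `z² + z = μ`. -/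
structure Dyadic {F : Type*} [Field F] (ord : F → WithTop ℤ) (e : ℤ) : Prop
    extends DyadicVal ord e where
  sq : ∀ x : F, Ex ord 0 x → ∃ t : F, Ge ord 1 (x - t ^ 2)
  as : (¬ ∃ z : F, Ge ord 0 z ∧ Ge ord 1 (z ^ 2 + z + 1)) →
    ∀ c : F, Ge ord 0 c → ∃ z : F, Ge ord 0 z ∧
      (Ge ord 1 (c - (z ^ 2 + z)) ∨ Ge ord 1 (c + 1 - (z ^ 2 + z)))
  hensel : ∀ μ : F, Ge ord 1 μ → ∃ z : F, Ge ord 1 z ∧ z ^ 2 + z = μ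

section toolkit

variable {F : Type*} {ord : F → WithTop ℤ}

theorem Ge.mono {n m : ℤ} {x : F} (h : Ge ord n x) (hm : m ≤ n) : Ge ord m x :=
  le_trans (by exact_mod_cast hm) h

theorem Ex.ge {n : ℤ} {x : F} (h : Ex ord n x) : Ge ord n x := le_of_eq (Eq.symm h)

theorem Ex.le {n m : ℤ} {x : F} (h : Ex ord n x) (h' : Ge ord m x) : m ≤ n := by
  unfold Ex at h; unfold Ge at h'; rw [h] at h'; exact_mod_cast h'

theorem Ex.uniq {n m : ℤ} {x : F} (h : Ex ord n x) (h' : Ex ord m x) : n = m := by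
  unfold Ex at h h'; rw [h] at h'; exact_mod_cast h'

theorem Ex.of {n m : ℤ} {x : F} (h : Ex ord n x) (h' : n = m) : Ex ord m x := h' ▸ h

namespace DyadicVal

variable [Field F] {e : ℤ} (H : DyadicVal ord e)
include H

theorem ne {n : ℤ} {x : F} (h : Ex ord n x) : x ≠ 0 := by
  rintro rfl
  have := (H.top 0).2 rfl
  unfold Ex at h; rw [this] at h; exact absurd h (by simp)

theorem ex {x : F} (h : x ≠ 0) : ∃ n : ℤ, Ex ord n x := by
  have h1 : ord x ≠ ⊤ := fun h' => h ((H.top x).1 h')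
  obtain ⟨n, hn⟩ := WithTop.ne_top_iff_exists.1 h1
  exact ⟨n, hn.symm⟩

theorem zero (n : ℤ) : Ge ord n (0 : F) := by
  unfold Ge; rw [(H.top 0).2 rfl]; exact le_top

theorem ex_of_not {n : ℤ} {x : F} (h : ¬ Ge ord n x) : ∃ m : ℤ, m < n ∧ Ex ord m x := by
  obtain ⟨m, hm⟩ := H.ex (x := x) (by rintro rfl; exact h (H.zero n))
  refine ⟨m, ?_, hm⟩
  by_contra hh
  exact h (hm.ge.mono (by omega))

theorem ex_of_ge {n : ℤ} {x : F} (h : Ge ord n x) (h' : ¬ Ge ord (n + 1) x) : Ex ord n x := by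
  obtain ⟨m, hm, hx⟩ := H.ex_of_not h'
  exact hx.of (by have := hx.le h; omega)

theorem exmul {n m : ℤ} {x y : F} (hx : Ex ord n x) (hy : Ex ord m y) : Ex ord (n + m) (x * y) := by
  unfold Ex at *; rw [H.mul, hx, hy]; rfl

theorem gmul {n m k : ℤ} {x y : F} (hx : Ge ord n x) (hy : Ge ord m y) (hk : k ≤ n + m) :
    Ge ord k (x * y) := by
  refine Ge.mono ?_ hk
  unfold Ge at *; rw [H.mul]
  push_cast
  exact add_le_add hx hy

theorem gadd {n : ℤ} {x y : F} (hx : Ge ord n x) (hy : Ge ord n y) : Ge ord n (x + y) :=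
  le_trans (le_min hx hy) (H.add x y)

theorem exone : Ex ord 0 (1 : F) := by
  obtain ⟨n, hn⟩ := H.ex (one_ne_zero (α := F))
  have := H.exmul hn hn
  rw [one_mul] at this
  exact hn.of (by have := hn.uniq this; omega)

theorem exnegone : Ex ord 0 (-1 : F) := by
  obtain ⟨n, hn⟩ := H.ex (neg_ne_zero.2 (one_ne_zero (α := F)))
  have := H.exmul hn hn
  rw [neg_mul_neg, one_mul] at this
  exact hn.of (by have := H.exone.uniq this; omega)

theorem exneg {n : ℤ} {x : F} (hx : Ex ord n x) : Ex ord n (-x) := by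
  have := H.exmul H.exnegone hx
  rw [neg_one_mul] at this
  exact this.of (by omega)

theorem gneg {n : ℤ} {x : F} (hx : Ge ord n x) : Ge ord n (-x) := by
  have := H.gmul H.exnegone.ge hx (k := n) (by omega)
  rwa [neg_one_mul] at this

theorem gsub {n : ℤ} {x y : F} (hx : Ge ord n x) (hy : Ge ord n y) : Ge ord n (x - y) := by
  rw [sub_eq_add_neg]; exact H.gadd hx (H.gneg hy)

theorem gone : Ge ord 0 (1 : F) := H.exone.ge

theorem extwo : Ex ord e (2 : F) := H.two

theorem two_ne : (2 : F) ≠ 0 := H.ne H.extwo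

theorem gsq {n k : ℤ} {x : F} (hx : Ge ord n x) (hk : k ≤ 2 * n) : Ge ord k (x ^ 2) := by
  rw [_root_.sq]; exact H.gmul hx hx (by omega)

theorem exsq {n : ℤ} {x : F} (hx : Ex ord n x) : Ex ord (2 * n) (x ^ 2) := by
  rw [_root_.sq]; exact (H.exmul hx hx).of (by omega)

theorem gtwo {n k : ℤ} {x : F} (hx : Ge ord n x) (hk : k ≤ n + e) : Ge ord k (2 * x) :=
  H.gmul H.extwo.ge hx (by omega)

theorem exinv {n : ℤ} {x : F} (hx : Ex ord n x) : Ex ord (-n) x⁻¹ := by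
  obtain ⟨m, hm⟩ := H.ex (inv_ne_zero (H.ne hx))
  have := H.exmul hx hm
  rw [mul_inv_cancel₀ (H.ne hx)] at this
  exact hm.of (by have := H.exone.uniq this; omega)

theorem exdiv {n m : ℤ} {x y : F} (hx : Ex ord n x) (hy : Ex ord m y) : Ex ord (n - m) (x / y) := by
  rw [div_eq_mul_inv]; exact (H.exmul hx (H.exinv hy)).of (by omega)

theorem gdiv {n m k : ℤ} {x y : F} (hx : Ge ord n x) (hy : Ex ord m y) (hk : k ≤ n - m) :
    Ge ord k (x / y) := by
  rw [div_eq_mul_inv]; exact H.gmul hx (H.exinv hy).ge (by omega)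

theorem exadd {n : ℤ} {x y : F} (hx : Ex ord n x) (hy : Ge ord (n + 1) y) : Ex ord n (x + y) := by
  refine H.ex_of_ge (H.gadd hx.ge (hy.mono (by omega))) fun h => ?_
  have h1 := H.gsub h hy
  rw [add_sub_cancel_right] at h1
  have := hx.le h1
  omega

theorem exadd' {n : ℤ} {x y : F} (hx : Ge ord (n + 1) x) (hy : Ex ord n y) :
    Ex ord n (x + y) := by
  rw [add_comm]; exact H.exadd hy hx

theorem exsub {n : ℤ} {x y : F} (hx : Ex ord n x) (hy : Ge ord (n + 1) y) : Ex ord n (x - y) := by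
  rw [sub_eq_add_neg]; exact H.exadd hx (H.gneg hy)

/-- Cancelling a factor of known order. -/
theorem gcancel {n m k : ℤ} {x y : F} (hx : Ex ord n x) (h : Ge ord m (x * y)) (hk : k + n ≤ m) :
    Ge ord k y := by
  have := H.gdiv h hx (k := k) (by omega)
  rwa [mul_div_cancel_left₀ _ (H.ne hx)] at this

theorem ghalf_sq {n k : ℤ} {x : F} (h : Ge ord n (x ^ 2)) (hk : 2 * k ≤ n + 1) : Ge ord k x := by
  by_contra hc
  obtain ⟨m, hm, hx⟩ := H.ex_of_not hc
  have := (H.exsq hx).le h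
  omega

theorem exroot {n : ℤ} {x : F} (h : Ex ord n (x ^ 2)) : ∃ m, n = 2 * m ∧ Ex ord m x := by
  have hx : x ≠ 0 := by
    rintro rfl
    exact H.ne h (by simp)
  obtain ⟨m, hm⟩ := H.ex hx
  exact ⟨m, h.uniq (H.exsq hm), hm⟩

theorem gfour : Ex ord (2 * e) (4 : F) := by
  have := H.exsq H.extwo
  norm_num at this
  exact this

end DyadicVal

namespace Dyadic

variable [Field F] {e : ℤ} (H : Dyadic ord e)
include H

/-- Elements of even order are squares up to terms of higher order. -/
theorem sqapprox {n : ℤ} {x : F} (h : Ex ord (2 * n) x) :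
    ∃ t : F, Ex ord n t ∧ Ge ord (2 * n + 1) (x - t ^ 2) := by
  obtain ⟨p, hp⟩ := H.surj n
  have hp : Ex ord n p := hp
  have hp0 := H.ne hp
  have h1 : Ex ord 0 (x / p ^ 2) := (H.exdiv h (H.exsq hp)).of (by omega)
  obtain ⟨t, ht⟩ := H.sq _ h1
  have ht : Ge ord 1 (x / p ^ 2 - t ^ 2) := ht
  have h2 : Ge ord (2 * n + 1) (x - (p * t) ^ 2) := by
    have := H.gmul (H.exsq hp).ge ht (k := 2 * n + 1) (by omega)
    convert this using 1
    field_simp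
  have h3 : Ex ord (2 * n) ((p * t) ^ 2) := by
    have := H.exsub h h2
    convert this using 1
    ring
  obtain ⟨m, hm, hm'⟩ := H.exroot h3
  exact ⟨p * t, hm'.of (by omega), h2⟩

end Dyadic
end toolkit

/-! ### Dyadic local fields satisfy the axioms -/

section basics
open Polynomial

variable {F : Type*} [Field F] [Algebra ℚ_[2] F] [FiniteDimensional ℚ_[2] F]
    [Algebra ℤ_[2] F] [IsScalarTower ℤ_[2] ℚ_[2] F]

theorem spectralNorm_le_one {x : F} (hx : IsIntegral ℤ_[2] x) : spectralNorm ℚ_[2] F x ≤ 1 := by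
  have hm : (minpoly ℚ_[2] x).Monic := minpoly.monic (Algebra.IsIntegral.isIntegral x)
  refine (spectralValue_le_one_iff hm).2 fun n => ?_
  rw [minpoly.isIntegrallyClosed_eq_field_fractions' ℚ_[2] hx, coeff_map]
  exact ((minpoly ℤ_[2] x).coeff n).2

/-- `2` is a non-unit: `1/2` is not integral over `ℤ₂`. -/
theorem e_pos {ord : F → WithTop ℤ}
    (hord_top : ∀ x : F, ord x = ⊤ ↔ x = 0)
    (hord_mul : ∀ x y : F, ord (x * y) = ord x + ord y)
    (hord_int : ∀ x : F, 0 ≤ ord x ↔ IsIntegral ℤ_[2] x)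
    {e : ℤ} (he : ord 2 = (e : WithTop ℤ)) : 1 ≤ e := by
  by_contra hlt
  have h20 : (2 : F) ≠ 0 := by
    intro h
    rw [(hord_top 2).2 h] at he
    exact absurd he (by simp)
  have h1 : ord (1 : F) = 0 := by
    have := hord_mul 1 1
    rw [one_mul] at this
    have hne : ord (1 : F) ≠ ⊤ := fun h => one_ne_zero ((hord_top 1).1 h)
    obtain ⟨n, hn⟩ := WithTop.ne_top_iff_exists.1 hne
    rw [← hn] at this ⊢
    have h3 : n = n + n := by exact_mod_cast this
    have : n = 0 := by omega
    simp [this]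
  have h2 : 0 ≤ ord ((2 : F)⁻¹) := by
    have := hord_mul 2 2⁻¹
    rw [mul_inv_cancel₀ h20, h1, he] at this
    by_cases hi : ord ((2 : F)⁻¹) = ⊤
    · rw [hi]; exact le_top
    obtain ⟨n, hn⟩ := WithTop.ne_top_iff_exists.1 hi
    rw [← hn] at this ⊢
    have h3 : 0 = e + n := by exact_mod_cast this
    exact_mod_cast (show 0 ≤ n by omega)
  have h3 := spectralNorm_le_one ((hord_int _).1 h2)
  have h4 : (2 : F)⁻¹ = algebraMap ℚ_[2] F (2⁻¹) := by rw [map_inv₀, map_ofNat]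
  rw [h4, spectralNorm_extends, norm_inv] at h3
  have := Padic.norm_p (p := 2)
  norm_num at this
  rw [this] at h3
  norm_num at h3

variable {ord : F → WithTop ℤ} {e : ℤ} (H : DyadicVal ord e)
    (hord_int : ∀ x : F, Ge ord 0 x ↔ IsIntegral ℤ_[2] x)
include H hord_int

theorem spectralNorm_lt_one {μ : F} (hμ : Ge ord 1 μ) : spectralNorm ℚ_[2] F μ < 1 := by
  have hpow : ∀ n : ℕ, Ge ord n (μ ^ n) := by
    intro n
    induction n with
    | zero => simpa using H.gone
    | succ n ih => rw [pow_succ]; exact H.gmul ih hμ (by push_cast; omega)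
  obtain ⟨n, hn⟩ := Int.eq_ofNat_of_zero_le (a := e) (by have := H.epos; omega)
  have h1 : Ge ord 0 (μ ^ n / 2) := H.gdiv (hpow n) H.extwo (by omega)
  have h2 := spectralNorm_le_one ((hord_int _).1 h1)
  let _ := spectralNorm.normedField ℚ_[2] F
  have h3 : ‖μ ^ n / 2‖ ≤ 1 := h2
  have h4 : ‖(2 : F)‖ = 1 / 2 := by
    have h5 : (2 : F) = algebraMap ℚ_[2] F 2 := by rw [map_ofNat]
    have h6 : ‖(2 : F)‖ = spectralNorm ℚ_[2] F 2 := rfl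
    rw [h6, h5, spectralNorm_extends]
    have := Padic.norm_p (p := 2)
    norm_num at this ⊢
    rw [this]
  rw [norm_div, norm_pow, h4] at h3
  have h7 : ‖μ‖ ^ n < 1 := by linarith
  by_contra hc
  have : 1 ≤ ‖μ‖ := not_lt.1 hc
  exact absurd (one_le_pow₀ this (n := n)) (by linarith)

/-- Hensel's lemma, as the fixed point of the contraction `z ↦ μ - z²` of the ball of
radius `‖μ‖ < 1` for the spectral norm. -/
theorem hensel_root {μ : F} (hμ : Ge ord 1 μ) : ∃ z : F, Ge ord 1 z ∧ z ^ 2 + z = μ := by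
  suffices h : ∃ z : F, z ^ 2 + z = μ by
    obtain ⟨z, hz⟩ := h
    by_cases hz1 : Ge ord 1 z
    · exact ⟨z, hz1, hz⟩
    obtain ⟨m, hm, hz2⟩ := H.ex_of_not hz1
    -- the other root `-1 - z` has positive order
    have h1 : z * (z + 1) = μ := by rw [← hz]; ring
    have hm0 : m = 0 := by
      by_contra hm0
      have h2 : Ex ord m (z + 1) := H.exadd hz2 (H.gone.mono (by omega))
      have h3 := (H.exmul hz2 h2).le (h1 ▸ hμ)
      omega
    refine ⟨-(z + 1), H.gneg (H.gcancel hz2 (h1 ▸ hμ) (by omega)), ?_⟩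
    rw [← hz]; ring
  have hlt := spectralNorm_lt_one H hord_int hμ
  let _ := spectralNorm.normedField ℚ_[2] F
  have : CompleteSpace F := spectralNorm.completeSpace ℚ_[2] F
  have hlt : ‖μ‖ < 1 := hlt
  have hna : ∀ x y : F, ‖x + y‖ ≤ max ‖x‖ ‖y‖ := fun x y =>
    isNonarchimedean_spectralNorm (K := ℚ_[2]) (L := F) x y
  have hsc : IsComplete (Metric.closedBall (0 : F) ‖μ‖) := Metric.isClosed_closedBall.isComplete
  have hsf : Set.MapsTo (fun z : F => μ - z ^ 2) (Metric.closedBall (0 : F) ‖μ‖)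
      (Metric.closedBall (0 : F) ‖μ‖) := by
    intro z hz
    rw [mem_closedBall_zero_iff] at hz ⊢
    have h1 := hna μ (-z ^ 2)
    rw [← sub_eq_add_neg, norm_neg, norm_pow] at h1
    refine h1.trans (max_le le_rfl ?_)
    nlinarith [norm_nonneg z, norm_nonneg μ]
  have hcon : ContractingWith ‖μ‖₊ (hsf.restrict _ _ _) := by
    refine ⟨by exact_mod_cast hlt, LipschitzWith.of_dist_le_mul ?_⟩
    rintro ⟨z, hz⟩ ⟨w, hw⟩
    rw [mem_closedBall_zero_iff] at hz hw
    change dist (μ - z ^ 2) (μ - w ^ 2) ≤ ‖μ‖ * dist z w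
    rw [dist_eq_norm, dist_eq_norm]
    have h1 : μ - z ^ 2 - (μ - w ^ 2) = -((z + w) * (z - w)) := by ring
    rw [h1, norm_neg, norm_mul]
    exact mul_le_mul_of_nonneg_right ((hna z w).trans (max_le hz hw)) (norm_nonneg _)
  obtain ⟨y, -, hy, -⟩ := hcon.exists_fixedPoint' hsc hsf (x := 0)
    (by simp) (edist_ne_top _ _)
  refine ⟨y, ?_⟩
  have hy : μ - y ^ 2 = y := hy
  nth_rewrite 2 [← hy]
  ring

/-- The residue field, as a quotient of the integral closure of `ℤ₂`, is finite; both the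
perfectness and the index statement of `Dyadic` are counting arguments there. -/
theorem residue :
    (∀ x : F, Ex ord 0 x → ∃ t : F, Ge ord 1 (x - t ^ 2)) ∧
    ((¬ ∃ z : F, Ge ord 0 z ∧ Ge ord 1 (z ^ 2 + z + 1)) →
      ∀ c : F, Ge ord 0 c → ∃ z : F, Ge ord 0 z ∧
        (Ge ord 1 (c - (z ^ 2 + z)) ∨ Ge ord 1 (c + 1 - (z ^ 2 + z)))) := by
  let O := integralClosure ℤ_[2] F
  have hO : ∀ x : O, Ge ord 0 (x : F) := fun x => (hord_int _).2 x.2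
  let P : Ideal O :=
    { carrier := {x | Ge ord 1 (x : F)}
      add_mem' := fun ha hb => H.gadd ha hb
      zero_mem' := H.zero 1
      smul_mem' := fun c x hx => H.gmul (hO c) hx (by omega) }
  have hP : ∀ x : O, x ∈ P ↔ Ge ord 1 (x : F) := fun x => Iff.rfl
  have : Module.Finite ℤ_[2] O := IsIntegralClosure.finite ℤ_[2] ℚ_[2] F O
  have hfin0 : Finite (O ⧸ (IsLocalRing.maximalIdeal ℤ_[2]) • (⊤ : Submodule ℤ_[2] O)) := by
    have : Finite (O ⧸ (⊤ : Submodule ℤ_[2] O)) := inferInstance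
    exact Submodule.finite_quotient_smul _ Module.Finite.fg_top
  have hle : (IsLocalRing.maximalIdeal ℤ_[2]) • (⊤ : Submodule ℤ_[2] O) ≤
      P.restrictScalars ℤ_[2] := by
    rw [Submodule.smul_le]
    intro r hr n _
    rw [PadicInt.maximalIdeal_eq_span_p, Ideal.mem_span_singleton] at hr
    obtain ⟨s, rfl⟩ := hr
    change Ge ord 1 (((((2 : ℕ) : ℤ_[2]) * s) • n : O) : F)
    have h1 : (((((2 : ℕ) : ℤ_[2]) * s) • n : O) : F) = 2 * ((s • n : O) : F) := by
      rw [mul_smul, Subalgebra.coe_smul, Algebra.smul_def, map_natCast, Nat.cast_ofNat]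
    rw [h1]
    exact H.gtwo (hO _) (by have := H.epos; omega)
  have hfin : Finite (O ⧸ P) := by
    refine Finite.of_surjective (Submodule.mapQ _ (P.restrictScalars ℤ_[2]) LinearMap.id hle) ?_
    intro y
    obtain ⟨x, rfl⟩ := Submodule.Quotient.mk_surjective _ y
    exact ⟨Submodule.Quotient.mk x, rfl⟩
  have hmk : ∀ x y : O, Ideal.Quotient.mk P x = Ideal.Quotient.mk P y ↔
      Ge ord 1 ((x : F) - y) := fun x y => by
    rw [Ideal.Quotient.eq, hP]; rfl
  have h2 : (2 : O ⧸ P) = 0 := by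
    have : (2 : O ⧸ P) = Ideal.Quotient.mk P 2 := (map_ofNat _ 2).symm
    rw [this, Ideal.Quotient.eq_zero_iff_mem, hP]
    exact H.extwo.ge.mono H.epos
  have hdom : ∀ x y : O ⧸ P, x * y = 0 → x = 0 ∨ y = 0 := by
    intro x y hxy
    obtain ⟨x, rfl⟩ := Ideal.Quotient.mk_surjective x
    obtain ⟨y, rfl⟩ := Ideal.Quotient.mk_surjective y
    rw [← map_mul, Ideal.Quotient.eq_zero_iff_mem, hP] at hxy
    rw [Ideal.Quotient.eq_zero_iff_mem, Ideal.Quotient.eq_zero_iff_mem, hP, hP]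
    by_contra hc
    push Not at hc
    have hx := H.ex_of_ge (n := 0) (hO x) hc.1
    have hy := H.ex_of_ge (n := 0) (hO y) hc.2
    have := (H.exmul hx hy).le hxy
    omega
  constructor
  · have hinj : Function.Injective (fun x : O ⧸ P => x ^ 2) := by
      intro x y hxy
      have hxy : x ^ 2 = y ^ 2 := hxy
      have h3 : (x - y) * (x - y) = 0 := by linear_combination hxy - y * (x - y) * h2
      rcases hdom _ _ h3 with h | h <;> exact sub_eq_zero.1 h
    have hsurj := Finite.surjective_of_injective hinj
    intro x hx
    obtain ⟨y, hy⟩ := hsurj (Ideal.Quotient.mk P ⟨x, (hord_int x).1 hx.ge⟩)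
    obtain ⟨y, rfl⟩ := Ideal.Quotient.mk_surjective y
    refine ⟨y, ?_⟩
    have hy : Ideal.Quotient.mk P y ^ 2 = _ := hy
    rw [← map_pow, eq_comm, hmk] at hy
    exact hy
  · intro hno c hc
    let f : O ⧸ P →+ O ⧸ P :=
      { toFun := fun z => z ^ 2 + z
        map_zero' := by ring
        map_add' := fun x y => by linear_combination x * y * h2 }
    have hf : ∀ z, f z = z ^ 2 + z := fun z => rfl
    have h1 : (1 : O ⧸ P) ∉ f.range := by
      rintro ⟨z, hz⟩
      obtain ⟨z, rfl⟩ := Ideal.Quotient.mk_surjective z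
      refine hno ⟨z, hO z, ?_⟩
      have h3 : Ideal.Quotient.mk P (z ^ 2 + z + 1) = 0 := by
        rw [hf] at hz
        simp only [map_add, map_pow, map_one]
        linear_combination hz + h2
      rw [Ideal.Quotient.eq_zero_iff_mem, hP] at h3
      exact h3
    have h10 : (1 : O ⧸ P) ≠ 0 := fun h => h1 (h ▸ f.range.zero_mem)
    have hker : Nat.card f.ker = 2 := by
      have : (f.ker : Set (O ⧸ P)) = {0, 1} := by
        ext z
        simp only [SetLike.mem_coe, AddMonoidHom.mem_ker, hf, Set.mem_insert_iff,
          Set.mem_singleton_iff]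
        constructor
        · intro hz
          rcases hdom z (z - 1) (by linear_combination hz - z * h2) with h | h
          · exact Or.inl h
          · exact Or.inr (sub_eq_zero.1 h)
        · rintro (rfl | rfl)
          · ring
          · linear_combination h2
      change Nat.card (f.ker : Set (O ⧸ P)) = 2
      rw [this, Nat.card_coe_set_eq, Set.ncard_pair (Ne.symm h10)]
    have hidx : f.range.index = 2 := by
      have e1 := f.ker.card_mul_index
      have e2 := f.range.card_mul_index
      rw [AddSubgroup.index_ker, hker, ← e2, mul_comm] at e1
      have : Nonempty f.range := ⟨⟨0, f.range.zero_mem⟩⟩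
      have : Finite f.range := Subtype.finite
      exact (Nat.eq_of_mul_eq_mul_left Nat.card_pos e1).symm
    have hmem : ∀ z : O, Ideal.Quotient.mk P z ∈ f.range →
        ∃ w : F, Ge ord 0 w ∧ Ge ord 1 ((z : F) - (w ^ 2 + w)) := by
      rintro z ⟨w, hw⟩
      obtain ⟨w, rfl⟩ := Ideal.Quotient.mk_surjective w
      refine ⟨w, hO w, ?_⟩
      rw [hf, ← map_pow, ← map_add, eq_comm, hmk] at hw
      exact hw
    let c' : O := ⟨c, (hord_int c).1 hc⟩
    by_cases hcm : Ideal.Quotient.mk P c' ∈ f.range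
    · obtain ⟨w, hw, hw'⟩ := hmem _ hcm
      exact ⟨w, hw, Or.inl hw'⟩
    · have h3 : Ideal.Quotient.mk P (c' + 1) ∈ f.range := by
        rw [map_add, AddSubgroup.add_mem_iff_of_index_two hidx, map_one]
        exact ⟨fun h => absurd h hcm, fun h => absurd h h1⟩
      obtain ⟨w, hw, hw'⟩ := hmem _ h3
      exact ⟨w, hw, Or.inr hw'⟩

theorem dyadic : Dyadic ord e :=
  { H with
    sq := (residue H hord_int).1
    as := (residue H hord_int).2
    hensel := fun _ hμ => hensel_root H hord_int hμ }

end basics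

/-! ### The defect conditions as congruences modulo `2` -/

section defect

/-- `b` is congruent to the square of an integer modulo `2`. -/
def SqMod {F : Type*} [Field F] (ord : F → WithTop ℤ) (e : ℤ) (b : F) : Prop :=
  ∃ s : F, Ge ord 0 s ∧ Ge ord e (b - s ^ 2)

variable {F : Type*} [Field F] {ord : F → WithTop ℤ} {e : ℤ} (H : DyadicVal ord e)
include H

/-- The infimum defining the quadratic defect, unfolded: a lower bound on it is the existence of a
good approximation of `c` by a square. -/
theorem le_quadDefect_iff {c : F} {n k : ℤ} (hc : Ex ord n c) :
    (k : WithTop ℤ) ≤ quadDefect ord c ↔ ∃ x : F, Ge ord (n + k) (c - x ^ 2) := by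
  have hc0 := H.ne hc
  constructor
  · intro h
    by_contra hno
    push Not at hno
    obtain ⟨z, hz⟩ := H.surj (n + k - 1)
    have hz : Ex ord (n + k - 1) z := hz
    -- an element of order `n + k - 1` lies in the intersection
    have hmem : ord (c⁻¹ * z) ∈ {v : WithTop ℤ | ∃ z : F,
        (∀ x : F, ∃ t : F, 0 ≤ ord t ∧ z = (c - x ^ 2) * t) ∧ v = ord (c⁻¹ * z)} := by
      refine ⟨z, fun x => ?_, rfl⟩
      obtain ⟨m, hm, hx⟩ := H.ex_of_not (hno x)
      refine ⟨z / (c - x ^ 2), ?_, ?_⟩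
      · exact H.gdiv hz.ge hx (k := 0) (by omega)
      · rw [mul_div_cancel₀ _ (H.ne hx)]
    have hbdd : BddBelow {v : WithTop ℤ | ∃ z : F,
        (∀ x : F, ∃ t : F, 0 ≤ ord t ∧ z = (c - x ^ 2) * t) ∧ v = ord (c⁻¹ * z)} := by
      refine ⟨0, ?_⟩
      rintro v ⟨w, hw, rfl⟩
      obtain ⟨t, ht, rfl⟩ := hw 0
      have : c⁻¹ * ((c - 0 ^ 2) * t) = t := by field_simp; ring
      rw [this]
      exact ht
    have h1 := h.trans (csInf_le hbdd hmem)
    have h2 := (H.exmul (H.exinv hc) hz).le h1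
    omega
  · rintro ⟨x, hx⟩
    refine le_csInf ⟨_, 0, fun x => ⟨0, ?_, by simp⟩, rfl⟩ ?_
    · exact H.zero 0
    · rintro v ⟨z, hz, rfl⟩
      obtain ⟨t, ht, rfl⟩ := hz x
      have ht : Ge ord 0 t := ht
      exact H.gmul (H.exinv hc).ge (H.gmul hx ht (k := n + k) (by omega)) (by omega)

/-- The two defect conditions say that `b₁` and `b₂` are squares modulo `2`. -/
theorem defect_iff_sqMod {b₁ b₂ : F} {S₁ S₂ : ℤ} (h1 : Ex ord S₁ b₁) (h2 : Ex ord S₂ b₂)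
    (h0 : 0 ≤ S₁) (hle : S₁ ≤ S₂) :
    (((e - S₁ : ℤ) : WithTop ℤ) ≤ quadDefect ord (-b₁) ∧
      ((e - S₂ : ℤ) : WithTop ℤ) ≤ quadDefect ord (-(b₁ * b₂))) ↔
    (SqMod ord e b₁ ∧ SqMod ord e b₂) := by
  have he := H.epos
  rw [le_quadDefect_iff H (H.exneg h1), le_quadDefect_iff H (H.exneg (H.exmul h1 h2)),
    show S₁ + (e - S₁) = e by omega, show S₁ + S₂ + (e - S₂) = S₁ + e by omega]
  constructor
  · rintro ⟨⟨x, hx⟩, y, hy⟩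
    have hx2 : x ^ 2 = -b₁ - (-b₁ - x ^ 2) := by ring
    have hx0 : Ge ord 0 x := by
      refine H.ghalf_sq (n := 0) ?_ (by omega)
      rw [hx2]
      exact H.gsub (H.gneg (h1.ge.mono h0)) (hx.mono (by omega))
    refine ⟨⟨x, hx0, ?_⟩, ?_⟩
    · have : b₁ - x ^ 2 = -(-b₁ - x ^ 2) - 2 * x ^ 2 := by ring
      rw [this]
      exact H.gsub (H.gneg hx) (H.gtwo (H.gsq hx0 (k := 0) (by omega)) (by omega))
    · by_cases hS : e ≤ S₂
      · exact ⟨0, H.zero 0, by simpa using h2.ge.mono hS⟩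
      have hx3 : Ex ord S₁ (x ^ 2) := by
        rw [hx2]
        exact H.exsub (H.exneg h1) (hx.mono (by omega))
      obtain ⟨m, hm, hxm⟩ := H.exroot hx3
      have hxne := H.ne hxm
      have hk : Ge ord e (b₂ - (y / x) ^ 2) := by
        refine H.gcancel hx3 (m := S₁ + e) ?_ (by omega)
        have : x ^ 2 * (b₂ - (y / x) ^ 2) =
            (-(b₁ * b₂) - y ^ 2) - (-b₁ - x ^ 2) * b₂ := by field_simp; ring
        rw [this]
        exact H.gsub hy (H.gmul hx h2.ge (by omega))
      refine ⟨y / x, H.ghalf_sq (n := 0) ?_ (by omega), hk⟩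
      have : (y / x) ^ 2 = b₂ - (b₂ - (y / x) ^ 2) := by ring
      rw [this]
      exact H.gsub (h2.ge.mono (by omega)) (hk.mono (by omega))
  · rintro ⟨⟨s, hs, hs'⟩, t, ht, ht'⟩
    refine ⟨⟨s, ?_⟩, ?_⟩
    · have : -b₁ - s ^ 2 = -(b₁ - s ^ 2) - 2 * s ^ 2 := by ring
      rw [this]
      exact H.gsub (H.gneg hs') (H.gtwo (H.gsq hs (k := 0) (by omega)) (by omega))
    · by_cases hS : e ≤ S₂
      · refine ⟨0, ?_⟩
        have : -(b₁ * b₂) - 0 ^ 2 = -(b₁ * b₂) := by ring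
        rw [this]
        exact H.gneg (H.gmul h1.ge h2.ge (by omega))
      refine ⟨s * t, ?_⟩
      have hs2 : Ge ord S₁ (s ^ 2) := by
        have : s ^ 2 = b₁ - (b₁ - s ^ 2) := by ring
        rw [this]
        exact H.gsub h1.ge (hs'.mono (by omega))
      have ht2 : Ge ord S₁ (t ^ 2) := by
        have : t ^ 2 = b₂ - (b₂ - t ^ 2) := by ring
        rw [this]
        exact H.gsub (h2.ge.mono hle) (ht'.mono (by omega))
      have : -(b₁ * b₂) - (s * t) ^ 2 = -(2 * (s ^ 2 * t ^ 2) + s ^ 2 * (b₂ - t ^ 2)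
          + (b₁ - s ^ 2) * t ^ 2 + (b₁ - s ^ 2) * (b₂ - t ^ 2)) := by ring
      rw [this]
      refine H.gneg (H.gadd (H.gadd (H.gadd ?_ ?_) ?_) ?_)
      · exact H.gtwo (H.gmul hs2 ht2 (k := S₁) (by omega)) (by omega)
      · exact H.gmul hs2 ht' le_rfl
      · exact H.gmul hs' ht2 (by omega)
      · exact H.gmul hs' ht' (by omega)

theorem sqMod_sum {u : Fin 4 → F} (hu : ∀ i, Ge ord 0 (u i)) : SqMod ord e (∑ i, u i ^ 2) := by
  refine ⟨u 0 + u 1 + u 2 + u 3,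
    H.gadd (H.gadd (H.gadd (hu 0) (hu 1)) (hu 2)) (hu 3), ?_⟩
  have : (∑ i, u i ^ 2) - (u 0 + u 1 + u 2 + u 3) ^ 2 =
      2 * -(u 0 * u 1 + u 0 * u 2 + u 0 * u 3 + u 1 * u 2 + u 1 * u 3 + u 2 * u 3) := by
    rw [Fin.sum_univ_four]; ring
  rw [this]
  have hm : ∀ i j, Ge ord 0 (u i * u j) := fun i j => H.gmul (hu i) (hu j) (by omega)
  exact H.gtwo (H.gneg (H.gadd (H.gadd (H.gadd (H.gadd (H.gadd (hm _ _) (hm _ _)) (hm _ _))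
    (hm _ _)) (hm _ _)) (hm _ _))) (by omega)

end defect

/-! ### The case where `-1` is a sum of two squares -/

section isotropic

variable {F : Type*} [Field F] {ord : F → WithTop ℤ} {e : ℤ}

theorem RepByIm.swap {O : Set F} {m : ℕ} {b₁ b₂ : F} (h : RepByIm O m b₁ b₂) :
    RepByIm O m b₂ b₁ := by
  obtain ⟨u, v, hu, hv, h1, h2, h3⟩ := h
  exact ⟨v, u, hv, hu, h2, h1, by simpa only [mul_comm] using h3⟩

theorem repByIm_mk {b₁ b₂ u₀ u₁ u₂ u₃ v₀ v₁ v₂ v₃ : F}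
    (h0 : Ge ord 0 u₀) (h1 : Ge ord 0 u₁) (h2 : Ge ord 0 u₂) (h3 : Ge ord 0 u₃)
    (k0 : Ge ord 0 v₀) (k1 : Ge ord 0 v₁) (k2 : Ge ord 0 v₂) (k3 : Ge ord 0 v₃)
    (hu : u₀ ^ 2 + u₁ ^ 2 + u₂ ^ 2 + u₃ ^ 2 = b₁) (hv : v₀ ^ 2 + v₁ ^ 2 + v₂ ^ 2 + v₃ ^ 2 = b₂)
    (huv : u₀ * v₀ + u₁ * v₁ + u₂ * v₂ + u₃ * v₃ = 0) :
    RepByIm {x : F | 0 ≤ ord x} 4 b₁ b₂ := by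
  refine ⟨![u₀, u₁, u₂, u₃], ![v₀, v₁, v₂, v₃], ?_, ?_, ?_, ?_, ?_⟩
  · intro i; fin_cases i <;> assumption
  · intro i; fin_cases i <;> assumption
  · rw [Fin.sum_univ_four]; exact hu
  · rw [Fin.sum_univ_four]; exact hv
  · rw [Fin.sum_univ_four]; exact huv

section val
variable (H : DyadicVal ord e)
include H

theorem integral_isotropic {p q : F} (h : p ^ 2 + q ^ 2 = -1) :
    ∃ p q : F, Ge ord 0 p ∧ Ge ord 0 q ∧ p ^ 2 + q ^ 2 = -1 := by
  by_cases hp : Ge ord 0 p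
  · refine ⟨p, q, hp, H.ghalf_sq (n := 0) ?_ (by omega), h⟩
    have : q ^ 2 = -1 - p ^ 2 := by linear_combination h
    rw [this]
    exact H.gsub H.exnegone.ge (H.gsq hp (by omega))
  · obtain ⟨m, hm, hp⟩ := H.ex_of_not hp
    have hp0 := H.ne hp
    have hq : Ex ord (2 * m) (q ^ 2) := by
      have : q ^ 2 = -(p ^ 2) + -1 := by linear_combination h
      rw [this]
      exact H.exadd (H.exneg (H.exsq hp)) (H.exnegone.ge.mono (by omega))
    obtain ⟨l, hl, hq⟩ := H.exroot hq
    refine ⟨q / p, 1 / p, H.gdiv hq.ge hp (by omega), H.gdiv H.gone hp (by omega), ?_⟩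
    field_simp
    linear_combination h

/-- If `-1 = p² + q²` with integral `p, q`, then `I₄` is the orthogonal sum of a hyperbolic plane
with basis `(1, p, q, 0)`, `(0, -p, -q, -1)` and the lines through `(1, p, q, 1)` and
`(0, -q, p, 0)`, of norms `1` and `-1`; the vectors are written in that basis. -/
theorem rep_of_isotropic {p q s α r x y b₁ b₂ : F} (hp : Ge ord 0 p) (hq : Ge ord 0 q)
    (hpq : p ^ 2 + q ^ 2 = -1) (hs : Ge ord 0 s) (hα : Ge ord 0 α) (hr : Ge ord 0 r)
    (hx : Ge ord 0 x) (hy : Ge ord 0 y) (h1 : b₁ = s ^ 2 + 2 * α)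
    (h2 : r ^ 2 + 2 * r * x - b₁ * y ^ 2 = b₂) : RepByIm {x : F | 0 ≤ ord x} 4 b₁ b₂ := by
  have m0 : ∀ {a b : F}, Ge ord 0 a → Ge ord 0 b → Ge ord 0 (a * b) :=
    fun ha hb => H.gmul ha hb (by omega)
  have ht : Ge ord 0 (x + r + y * s) := H.gadd (H.gadd hx hr) (m0 hy hs)
  have hz : Ge ord 0 (-s * (x + r + y * s) - α * y) := H.gsub (m0 (H.gneg hs) ht) (m0 hα hy)
  generalize htt : x + r + y * s = t at ht hz
  generalize hzz : -s * t - α * y = z at hz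
  have hg := H.gsub (H.gadd hs H.gone) hα
  have hw := H.gsub (H.gadd ht hy) hz
  refine repByIm_mk (u₀ := s + 1) (u₁ := (s + 1 - α) * p) (u₂ := (s + 1 - α) * q) (u₃ := s - α)
    (v₀ := t + y) (v₁ := (t + y - z) * p - x * q) (v₂ := (t + y - z) * q + x * p) (v₃ := t - z)
    (H.gadd hs H.gone) (m0 hg hp) (m0 hg hq) (H.gsub hs hα)
    (H.gadd ht hy) (H.gsub (m0 hw hp) (m0 hx hq)) (H.gadd (m0 hw hq) (m0 hx hp)) (H.gsub ht hz)
    ?_ ?_ ?_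
  · linear_combination (s + 1 - α) ^ 2 * hpq - h1
  · subst h1 hzz
    rw [← h2, ← htt]
    linear_combination ((x + r + y * s + y - (-s * (x + r + y * s) - α * y)) ^ 2 + x ^ 2) * hpq
  · subst hzz
    linear_combination ((s + 1 - α) * (t + y - (-s * t - α * y))) * hpq

theorem dvd_or_dvd (A B : F) : (∃ y, Ge ord 0 y ∧ B = A * y) ∨ (∃ y, Ge ord 0 y ∧ A = B * y) := by
  by_cases hA : A = 0
  · exact Or.inr ⟨0, H.zero 0, by simp [hA]⟩
  by_cases hB : B = 0
  · exact Or.inl ⟨0, H.zero 0, by simp [hB]⟩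
  obtain ⟨n, hn⟩ := H.ex hA
  obtain ⟨m, hm⟩ := H.ex hB
  rcases le_total n m with h | h
  · exact Or.inl ⟨B / A, H.gdiv hm.ge hn (by omega), by field_simp⟩
  · exact Or.inr ⟨A / B, H.gdiv hn.ge hm (by omega), by field_simp⟩

/-- The solution of `b₂ ≡ r² - b₁y² (mod 2r)` for a pair in the normal form of
`exists_normal_form` whose second `A`-coordinate is a multiple of the first. -/
theorem exists_r {s t ε A y₀ κ₁ κ₂ b₁ b₂ : F} (hs : Ge ord 0 s) (ht : Ge ord 0 t) (hε : Ge ord 0 ε)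
    (hA : Ge ord 0 A) (hy₀ : Ge ord 0 y₀) (hκ₁ : Ge ord 0 κ₁) (hκ₂ : Ge ord 0 κ₂)
    (h1 : b₁ = s ^ 2 + 2 * ε * A ^ 2 + 4 * κ₁) (h2 : b₂ = t ^ 2 + 2 * ε * (A * y₀) ^ 2 + 4 * κ₂) :
    ∃ r y x : F, Ge ord 0 r ∧ Ge ord 0 y ∧ Ge ord 0 x ∧ r ^ 2 + 2 * r * x - b₁ * y ^ 2 = b₂ := by
  have he := H.epos
  suffices h : ∃ r y : F, ∃ m : ℤ, 0 ≤ m ∧ Ex ord m r ∧ Ge ord 0 y ∧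
      Ge ord (e + m) (b₂ + b₁ * y ^ 2 - r ^ 2) by
    obtain ⟨r, y, m, hm, hr, hy, h⟩ := h
    have hr0 := H.ne hr
    have h20 := H.two_ne
    refine ⟨r, y, (b₂ + b₁ * y ^ 2 - r ^ 2) / (2 * r), hr.ge.mono hm, hy,
      H.gdiv h (H.exmul H.extwo hr) (by omega), ?_⟩
    field_simp
    ring
  have m0 : ∀ {a b : F}, Ge ord 0 a → Ge ord 0 b → Ge ord 0 (a * b) :=
    fun ha hb => H.gmul ha hb (by omega)
  have hP : Ge ord 0 (s * y₀) := m0 hs hy₀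
  obtain ⟨P, hPdef⟩ : ∃ P, P = s * y₀ := ⟨_, rfl⟩
  rw [← hPdef] at hP
  have hB : Ge ord 0 (ε * (A * y₀) ^ 2) := m0 hε (H.gsq (m0 hA hy₀) (by omega))
  have hκ : ∀ {y : F}, Ge ord 0 y → Ge ord 0 (κ₁ * y ^ 2 + κ₂) := fun hy =>
    H.gadd (m0 hκ₁ (H.gsq hy (by omega))) hκ₂
  by_cases c1 : ∃ m, m ≤ e ∧ Ex ord m (P + t) ∧ Ge ord m (P * t)
  · obtain ⟨m, hm, hr, hPT⟩ := c1
    refine ⟨P + t, y₀, m, hr.le (H.gadd hP ht), hr, hy₀, ?_⟩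
    have : b₂ + b₁ * y₀ ^ 2 - (P + t) ^ 2 =
        4 * (ε * (A * y₀) ^ 2 + (κ₁ * y₀ ^ 2 + κ₂)) - 2 * (P * t) := by
      rw [h1, h2, hPdef]; ring
    rw [this]
    exact H.gsub (H.gmul H.gfour.ge (H.gadd hB (hκ hy₀)) (by omega)) (H.gtwo hPT (by omega))
  have c1' : ∀ m, m ≤ e → Ge ord m (P * t) → Ge ord (m + 1) (P + t) := by
    intro m hm hg
    by_contra hc
    obtain ⟨l, hl, hx⟩ := H.ex_of_not hc
    exact c1 ⟨l, by omega, hx, hg.mono (by omega)⟩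
  by_cases c2 : Ge ord e (P * t)
  · have h3 := c1' e le_rfl c2
    refine ⟨2, y₀, e, by omega, H.extwo, hy₀, ?_⟩
    have : b₂ + b₁ * y₀ ^ 2 - 2 ^ 2 = (P + t) ^ 2 +
        4 * (ε * (A * y₀) ^ 2 + (κ₁ * y₀ ^ 2 + κ₂) - 1) - 2 * (P * t) := by
      rw [h1, h2, hPdef]; ring
    rw [this]
    exact H.gsub (H.gadd (H.gsq h3 (by omega))
      (H.gmul H.gfour.ge (H.gsub (H.gadd hB (hκ hy₀)) H.gone) (by omega))) (H.gtwo c2 (by omega))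
  · obtain ⟨k, hk, hPT⟩ := H.ex_of_not c2
    have h3 := c1' k (by omega) hPT.ge
    have hPT0 := H.ne hPT
    obtain ⟨i, hi⟩ := H.ex (left_ne_zero_of_mul hPT0)
    obtain ⟨j, hj⟩ := H.ex (right_ne_zero_of_mul hPT0)
    have hk2 := hPT.uniq (H.exmul hi hj)
    have hi0 := hi.le hP
    have hj0 := hj.le ht
    have hj' : Ex ord i t := by
      have : t = -P + (P + t) := by ring
      rw [this]
      exact H.exadd (H.exneg hi) (h3.mono (by omega))
    have hij := hj.uniq hj'
    have hP1 := H.gadd H.gone hP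
    have hy : Ge ord 0 (y₀ * (1 + P)) := m0 hy₀ hP1
    refine ⟨P ^ 2 + (P + t), y₀ * (1 + P), 2 * i, by omega,
      H.exadd (H.exsq hi) (h3.mono (by omega)), hy, ?_⟩
    have : b₂ + b₁ * (y₀ * (1 + P)) ^ 2 - (P ^ 2 + (P + t)) ^ 2 =
        4 * (ε * (A * y₀) ^ 2 * (1 + P) + (κ₁ * (y₀ * (1 + P)) ^ 2 + κ₂))
        + 2 * (ε * (A * y₀) ^ 2 * P ^ 2) - 2 * (P * t * (1 + P)) := by
      rw [h1, h2, hPdef]; ring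
    rw [this]
    refine H.gsub (H.gadd ?_ ?_) ?_
    · exact H.gmul H.gfour.ge (H.gadd (m0 hB hP1) (hκ hy)) (by omega)
    · exact H.gtwo (H.gmul hB (H.exsq hi).ge (k := 2 * i) (by omega)) (by omega)
    · exact H.gtwo (H.gmul hPT.ge hP1 (k := 2 * i) (by omega)) (by omega)

end val

variable (H : Dyadic ord e)
include H

/-- Squares modulo `2` have the form `s² + 2εA² + 4κ`, with one `ε` (of order `0` or `1`, of parity
opposite to `e`) serving for all of them. -/
theorem exists_normal_form : ∃ ε : F, Ge ord 0 ε ∧ ∀ b : F, SqMod ord e b →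
    ∃ s A κ : F, Ge ord 0 s ∧ Ge ord 0 A ∧ Ge ord 0 κ ∧ b = s ^ 2 + 2 * ε * A ^ 2 + 4 * κ := by
  have he := H.epos
  obtain ⟨f, a, ha0, ha1, hfe⟩ : ∃ f a : ℤ, 0 ≤ a ∧ a ≤ 1 ∧ e = 2 * f - 1 + a := by
    rcases Int.even_or_odd' e with ⟨f, hf | hf⟩
    · exact ⟨f, 1, by omega, by omega, by omega⟩
    · exact ⟨f + 1, 0, by omega, by omega, by omega⟩
  obtain ⟨ε, hε⟩ := H.surj a
  have hε : Ex ord a ε := hε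
  obtain ⟨p, hp⟩ := H.surj f
  have hp : Ex ord f p := hp
  have hε0 := H.ne hε
  have hp0 := H.ne hp
  have h20 := H.two_ne
  refine ⟨ε, hε.ge.mono ha0, ?_⟩
  rintro b ⟨s₀, hs₀, hb⟩
  have key : ∀ n : ℕ, (n : ℤ) ≤ e → ∃ s A ρ : F, Ge ord 0 s ∧ Ge ord 0 A ∧ Ge ord n ρ ∧
      b = s ^ 2 + 2 * ε * A ^ 2 + 2 * ρ := by
    intro n
    induction n with
    | zero =>
      intro _
      refine ⟨s₀, 0, (b - s₀ ^ 2) / 2, hs₀, H.zero 0, H.gdiv hb H.extwo (by simp), ?_⟩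
      field_simp
      ring
    | succ n ih =>
      intro hn
      push_cast at hn
      obtain ⟨s, A, ρ, hs, hA, hρ, hbe⟩ := ih (by omega)
      by_cases hρ1 : Ge ord (n + 1) ρ
      · exact ⟨s, A, ρ, hs, hA, by exact_mod_cast hρ1, hbe⟩
      have hρ := H.ex_of_ge hρ hρ1
      push_cast
      rcases Int.even_or_odd' (n - a) with ⟨m, hm | hm⟩
      · -- the leading term of `ρ` is `ε` times a square
        obtain ⟨x, hx, hxx⟩ := H.sqapprox (n := m) ((H.exdiv hρ hε).of hm)
        refine ⟨s, A + x, ρ - ε * x ^ 2 - 2 * (ε * (A * x)), hs,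
          H.gadd hA (hx.ge.mono (by omega)), H.gsub ?_ ?_, ?_⟩
        · have : ρ - ε * x ^ 2 = ε * (ρ / ε - x ^ 2) := by field_simp
          rw [this]
          exact H.gmul hε.ge hxx (by omega)
        · exact H.gtwo (H.gmul hε.ge (H.gmul hA hx.ge (k := m) (by omega)) (k := a + m)
            (by omega)) (by omega)
        · rw [hbe]; ring
      · -- the leading term of `2ρ` is a square
        have h3 : Ex ord (2 * (m + a)) (ρ * 2 / p ^ 2) :=
          (H.exdiv (H.exmul hρ H.extwo) (H.exsq hp)).of (by omega)
        obtain ⟨k, hk, hkk⟩ := H.sqapprox h3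
        refine ⟨s + p * k, A, p ^ 2 / 2 * (ρ * 2 / p ^ 2 - k ^ 2) - s * (p * k), H.gadd hs
          (H.gmul hp.ge hk.ge (by omega)), hA, H.gsub ?_ ?_, ?_⟩
        · exact H.gmul (H.exdiv (H.exsq hp) H.extwo).ge hkk (by omega)
        · exact H.gmul hs (H.gmul hp.ge hk.ge le_rfl) (by omega)
        · rw [hbe]; field_simp; ring
  obtain ⟨n, hn⟩ := Int.eq_ofNat_of_zero_le (a := e) (by omega)
  obtain ⟨s, A, ρ, hs, hA, hρ, hb⟩ := key n (by omega)
  refine ⟨s, A, ρ / 2, hs, hA, H.gdiv hρ H.extwo (by omega), ?_⟩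
  rw [hb]; field_simp; ring

theorem rep_of_neg_one_sum_two_sq {p q b₁ b₂ : F} (hpq : p ^ 2 + q ^ 2 = -1)
    (h1 : SqMod ord e b₁) (h2 : SqMod ord e b₂) : RepByIm {x : F | 0 ≤ ord x} 4 b₁ b₂ := by
  obtain ⟨p, q, hp, hq, hpq⟩ := integral_isotropic H.toDyadicVal hpq
  have h20 := H.two_ne
  have hα : ∀ {b : F}, SqMod ord e b → ∃ s α, Ge ord 0 s ∧ Ge ord 0 α ∧ b = s ^ 2 + 2 * α := by
    rintro b ⟨s, hs, hb⟩
    refine ⟨s, (b - s ^ 2) / 2, hs, H.gdiv hb H.extwo (by omega), ?_⟩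
    field_simp; ring
  obtain ⟨ε, hε, hn⟩ := exists_normal_form H
  obtain ⟨s, A, κ₁, hs, hA, hκ₁, hb₁⟩ := hn b₁ h1
  obtain ⟨t, B, κ₂, ht, hB, hκ₂, hb₂⟩ := hn b₂ h2
  rcases dvd_or_dvd H.toDyadicVal A B with ⟨y₀, hy₀, rfl⟩ | ⟨y₀, hy₀, rfl⟩
  · obtain ⟨r, y, x, hr, hy, hx, h⟩ := exists_r H.toDyadicVal hs ht hε hA hy₀ hκ₁ hκ₂ hb₁ hb₂
    obtain ⟨s', α, hs', hα, hbs⟩ := hα h1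
    exact rep_of_isotropic H.toDyadicVal hp hq hpq hs' hα hr hx hy hbs h
  · obtain ⟨r, y, x, hr, hy, hx, h⟩ := exists_r H.toDyadicVal ht hs hε hB hy₀ hκ₂ hκ₁ hb₂ hb₁
    obtain ⟨s', α, hs', hα, hbs⟩ := hα h2
    exact RepByIm.swap (rep_of_isotropic H.toDyadicVal hp hq hpq hs' hα hr hx hy hbs h)

end isotropic

/-! ### The case where `-1` is not a sum of two squares: reduction to a norm equation -/

section anisotropic

variable {F : Type*} [Field F] {ord : F → WithTop ℤ} {e : ℤ} (H : Dyadic ord e)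
    (hA : ∀ p q : F, p ^ 2 + q ^ 2 ≠ -1)
include H hA

/-- A primitive cube root of unity `ω` would give `ω² + (ω + 1)² = -1`. -/
theorem no_cube_root : ¬ ∃ z : F, Ge ord 0 z ∧ Ge ord 1 (z ^ 2 + z + 1) := by
  rintro ⟨z, hz, hz1⟩
  have he := H.epos
  have hu : Ex ord 0 (1 + 2 * z) := H.exadd H.exone (H.gtwo hz (by omega))
  have hu0 := H.ne hu
  obtain ⟨w, -, hw⟩ := H.hensel (-(z ^ 2 + z + 1) / (1 + 2 * z) ^ 2)
    (H.gdiv (H.gneg hz1) (H.exsq hu) (by omega))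
  rw [eq_div_iff (pow_ne_zero 2 hu0)] at hw
  refine hA (z + (1 + 2 * z) * w) (z + (1 + 2 * z) * w + 1) ?_
  linear_combination 2 * hw

/-- If `e` were even, `2` would be minus a square up to higher order, and Hensel's lemma would make
`-1` a sum of two squares. -/
theorem e_odd : ∃ f, e = 2 * f + 1 := by
  have he := H.epos
  have h20 := H.two_ne
  rcases Int.even_or_odd' e with ⟨f, hf | hf⟩
  swap
  · exact ⟨f, hf⟩
  exfalso
  obtain ⟨δ, hδ, hδ2⟩ := H.sqapprox (n := f) ((H.exneg H.extwo).of hf)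
  have hu : Ex ord 0 (1 - δ) := H.exsub H.exone (hδ.ge.mono (by omega))
  have hu0 := H.ne hu
  have hC : Ge ord 1 (-(-δ - (-2 - δ ^ 2) / 2)) :=
    H.gneg (H.gsub (H.gneg (hδ.ge.mono (by omega))) (H.gdiv hδ2 H.extwo (by omega)))
  obtain ⟨w, -, hw⟩ := H.hensel _ (H.gdiv hC (H.exsq hu) (k := 1) (by omega))
  rw [eq_div_iff (pow_ne_zero 2 hu0)] at hw
  refine hA ((1 - δ) * w) (-1 - (1 - δ) * w + δ) ?_
  field_simp at hw
  linear_combination hw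

/-- The coordinate of least order of a ternary vector is integral if the norm is congruent modulo `2`
to the square of an integer; otherwise, rescaling that coordinate to `1` produces a root of
`y² + y + 1` in the residue field. -/
theorem integral_of_min {x₁ x₂ x₃ c : F} (h2 : ord x₁ ≤ ord x₂) (h3 : ord x₁ ≤ ord x₃)
    (hc : Ge ord 0 c) (h : Ge ord e (x₁ ^ 2 + x₂ ^ 2 + x₃ ^ 2 - c ^ 2)) : Ge ord 0 x₁ := by
  by_contra hx
  have he := H.epos
  obtain ⟨m, hm, hx⟩ := H.ex_of_not hx
  have hx0 := H.ne hx
  obtain ⟨f, hf⟩ := e_odd H hA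
  have hx2 : Ge ord m x₂ := le_trans hx.ge h2
  have hx3 : Ge ord m x₃ := le_trans hx.ge h3
  have hy2 : Ge ord 0 (x₂ / x₁) := H.gdiv hx2 hx (by omega)
  have hy3 : Ge ord 0 (x₃ / x₁) := H.gdiv hx3 hx (by omega)
  have hg : Ge ord 1 (c / x₁) := H.gdiv hc hx (by omega)
  have hR : Ge ord (e + 1) ((x₁ ^ 2 + x₂ ^ 2 + x₃ ^ 2 - c ^ 2) / x₁ ^ 2) :=
    H.gdiv h (H.exsq hx) (by omega)
  have hRe : (x₁ ^ 2 + x₂ ^ 2 + x₃ ^ 2 - c ^ 2) / x₁ ^ 2 =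
      1 + (x₂ / x₁) ^ 2 + (x₃ / x₁) ^ 2 - (c / x₁) ^ 2 := by field_simp
  generalize (x₁ ^ 2 + x₂ ^ 2 + x₃ ^ 2 - c ^ 2) / x₁ ^ 2 = R at hR hRe
  generalize x₂ / x₁ = y at *
  generalize x₃ / x₁ = z at *
  generalize c / x₁ = g at *
  have hg0 : Ge ord 0 g := hg.mono (by omega)
  have hy1 := H.gadd H.gone hy2
  have hδ0 : Ge ord 0 (z + 1 + y - g) := H.gsub (H.gadd (H.gadd hy3 H.gone) hy2) hg0
  obtain ⟨δ, hδ⟩ : ∃ δ, δ = z + 1 + y - g := ⟨_, rfl⟩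
  rw [← hδ] at hδ0
  have hz : z = δ - 1 - y + g := by rw [hδ]; ring
  subst hz
  have hq : Ge ord 0 (y ^ 2 + y + 1) := H.gadd (H.gadd (H.gsq hy2 (by omega)) hy2) H.gone
  have h1 : δ ^ 2 = R - 2 * (g * δ) + 2 * ((1 + y) * (g + δ)) - 2 * (y ^ 2 + y + 1) := by
    rw [hRe]; ring
  have h4 : Ge ord e (δ ^ 2) := by
    rw [h1]
    refine H.gsub (H.gadd (H.gsub (hR.mono (by omega)) ?_) ?_) ?_
    · exact H.gtwo (H.gmul hg0 hδ0 (k := 0) (by omega)) (by omega)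
    · exact H.gtwo (H.gmul hy1 (H.gadd hg0 hδ0) (k := 0) (by omega)) (by omega)
    · exact H.gtwo hq (by omega)
  -- `e` is odd, so `2 ord δ ≥ e` improves to `2 ord δ ≥ e + 1`
  have h5 : Ge ord (f + 1) δ := H.ghalf_sq h4 (by omega)
  have h6 : Ge ord 1 δ := h5.mono (by omega)
  refine no_cube_root H hA ⟨y, hy2, H.gcancel H.extwo (m := e + 1) ?_ (by omega)⟩
  have h7 : 2 * (y ^ 2 + y + 1) = R - 2 * (g * δ) + 2 * ((1 + y) * (g + δ)) - δ ^ 2 := by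
    rw [h1]; ring
  rw [h7]
  refine H.gsub (H.gadd (H.gsub hR ?_) ?_) (H.gsq h5 (by omega))
  · exact H.gtwo (H.gmul hg hδ0 (k := 1) (by omega)) (by omega)
  · exact H.gtwo (H.gmul hy1 (H.gadd hg h6) (k := 1) (by omega)) (by omega)

/-- A vector whose norm is a square modulo `2` is integral as soon as one coordinate is. -/
theorem integral_of_sqMod {x₀ x₁ x₂ x₃ : F} (h0 : Ge ord 0 x₀)
    (h : SqMod ord e (x₀ ^ 2 + x₁ ^ 2 + x₂ ^ 2 + x₃ ^ 2)) :
    Ge ord 0 x₁ ∧ Ge ord 0 x₂ ∧ Ge ord 0 x₃ := by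
  obtain ⟨s, hs, hs2⟩ := h
  have hc := H.gadd hs h0
  have hk : Ge ord e (x₁ ^ 2 + x₂ ^ 2 + x₃ ^ 2 - (s + x₀) ^ 2) := by
    have : x₁ ^ 2 + x₂ ^ 2 + x₃ ^ 2 - (s + x₀) ^ 2 =
        (x₀ ^ 2 + x₁ ^ 2 + x₂ ^ 2 + x₃ ^ 2 - s ^ 2) - 2 * (x₀ * (x₀ + s)) := by ring
    rw [this]
    exact H.gsub hs2 (H.gtwo (H.gmul h0 (H.gadd h0 hs) (k := 0) (by omega)) (by omega))
  have k2 : Ge ord e (x₂ ^ 2 + x₁ ^ 2 + x₃ ^ 2 - (s + x₀) ^ 2) := by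
    rwa [add_comm (x₂ ^ 2) (x₁ ^ 2)]
  have k3 : Ge ord e (x₃ ^ 2 + x₁ ^ 2 + x₂ ^ 2 - (s + x₀) ^ 2) := by
    rwa [show x₃ ^ 2 + x₁ ^ 2 + x₂ ^ 2 = x₁ ^ 2 + x₂ ^ 2 + x₃ ^ 2 by ring]
  have tr : ∀ {x y : F}, ord x ≤ ord y → Ge ord 0 x → Ge ord 0 y := fun h h' => le_trans h' h
  rcases le_total (ord x₁) (ord x₂) with a | a
  · rcases le_total (ord x₁) (ord x₃) with b | b
    · have := integral_of_min H hA a b hc hk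
      exact ⟨this, tr a this, tr b this⟩
    · have := integral_of_min H hA b (b.trans a) hc k3
      exact ⟨tr b this, tr (b.trans a) this, this⟩
  · rcases le_total (ord x₂) (ord x₃) with b | b
    · have := integral_of_min H hA a b hc k2
      exact ⟨tr a this, this, tr b this⟩
    · have := integral_of_min H hA (b.trans a) b hc k3
      exact ⟨tr (b.trans a) this, tr b this, this⟩

/-- The case of a pure vector `W = (W₁, W₂, W₃)` of norm `b₁b₂` with `W₁² + W₂² ≠ 0`.  In terms of
quaternions, with `J = (-W₂, W₁, 0)` orthogonal to `W`, the vectors are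
`x = a + (b/b₂)W + (c + dW)J` and `y = Wx/b₁`; their real parts `a`, `-b` are integral. -/
theorem rep_of_pure {b₁ b₂ W₁ W₂ W₃ : F} (hb₁ : b₁ ≠ 0) (hb₂ : b₂ ≠ 0)
    (hW : W₁ ^ 2 + W₂ ^ 2 + W₃ ^ 2 = b₁ * b₂) (hJ : W₁ ^ 2 + W₂ ^ 2 ≠ 0)
    (h1 : SqMod ord e b₁) (h2 : SqMod ord e b₂)
    (hG : ∀ N : F, N ≠ 0 → ∃ a b c d : F, Ge ord 0 a ∧ Ge ord 0 b ∧
      b₁ - a ^ 2 - b ^ 2 * b₁ / b₂ = N * (c ^ 2 + b₁ * b₂ * d ^ 2)) :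
    RepByIm {x : F | 0 ≤ ord x} 4 b₁ b₂ := by
  obtain ⟨a, b, c, d, ha, hb, hN⟩ := hG _ hJ
  have hN' : b₁ * b₂ - a ^ 2 * b₂ - b ^ 2 * b₁ =
      (W₁ ^ 2 + W₂ ^ 2) * (c ^ 2 + b₁ * b₂ * d ^ 2) * b₂ := by
    rw [← hN]; field_simp
  have hx : a ^ 2 + (b / b₂ * W₁ - c * W₂ - d * (W₁ * W₃)) ^ 2 +
      (b / b₂ * W₂ + c * W₁ - d * (W₂ * W₃)) ^ 2 +
      (b / b₂ * W₃ + d * (W₁ ^ 2 + W₂ ^ 2)) ^ 2 = b₁ := by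
    have h3 : (b / b₂) * b₂ = b := by field_simp
    have h4 : b ^ 2 * b₁ / b₂ = (b / b₂) ^ 2 * (b₁ * b₂) := by field_simp
    rw [h4] at hN
    linear_combination (-1 : F) * hN + ((b / b₂) ^ 2 + d ^ 2 * (W₁ ^ 2 + W₂ ^ 2)) * hW
  have hy : (-b) ^ 2 + (a / b₁ * W₁ - c / b₁ * (W₁ * W₃) + d * b₂ * W₂) ^ 2 +
      (a / b₁ * W₂ - c / b₁ * (W₂ * W₃) - d * b₂ * W₁) ^ 2 +
      (a / b₁ * W₃ + c / b₁ * (W₁ ^ 2 + W₂ ^ 2)) ^ 2 = b₂ := by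
    have h5 : (-b) ^ 2 + (a / b₁ * W₁ - c / b₁ * (W₁ * W₃) + d * b₂ * W₂) ^ 2 +
      (a / b₁ * W₂ - c / b₁ * (W₂ * W₃) - d * b₂ * W₁) ^ 2 +
      (a / b₁ * W₃ + c / b₁ * (W₁ ^ 2 + W₂ ^ 2)) ^ 2 =
      b ^ 2 + (a ^ 2 + c ^ 2 * (W₁ ^ 2 + W₂ ^ 2)) / b₁ ^ 2 * (W₁ ^ 2 + W₂ ^ 2 + W₃ ^ 2) +
        d ^ 2 * b₂ ^ 2 * (W₁ ^ 2 + W₂ ^ 2) := by field_simp; ring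
    rw [h5, hW]
    field_simp
    linear_combination (-1 : F) * hN'
  obtain ⟨u1, u2, u3⟩ := integral_of_sqMod H hA ha (by rw [hx]; exact h1)
  obtain ⟨v1, v2, v3⟩ := integral_of_sqMod H hA (H.gneg hb) (by rw [hy]; exact h2)
  refine repByIm_mk ha u1 u2 u3 (H.gneg hb) v1 v2 v3 hx hy ?_
  have h6 : a * -b + (b / b₂ * W₁ - c * W₂ - d * (W₁ * W₃)) *
        (a / b₁ * W₁ - c / b₁ * (W₁ * W₃) + d * b₂ * W₂) +
      (b / b₂ * W₂ + c * W₁ - d * (W₂ * W₃)) *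
        (a / b₁ * W₂ - c / b₁ * (W₂ * W₃) - d * b₂ * W₁) +
      (b / b₂ * W₃ + d * (W₁ ^ 2 + W₂ ^ 2)) *
        (a / b₁ * W₃ + c / b₁ * (W₁ ^ 2 + W₂ ^ 2)) =
      -(a * b) + (a * b / (b₁ * b₂) + c * d * (W₁ ^ 2 + W₂ ^ 2) / b₁) *
        (W₁ ^ 2 + W₂ ^ 2 + W₃ ^ 2) - c * d * b₂ * (W₁ ^ 2 + W₂ ^ 2) := by
    field_simp; ring
  rw [h6, hW]
  field_simp
  ring

/-- Reduction of the anisotropic case to a norm equation: for any `u`, `v` representing `b₁`, `b₂` over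
`F`, the quaternion `W = v ū` is pure of norm `b₁b₂`. -/
theorem rep_of_norm_eq {b₁ b₂ : F} (hb₁ : b₁ ≠ 0) (hb₂ : b₂ ≠ 0)
    (h1 : SqMod ord e b₁) (h2 : SqMod ord e b₂)
    (hrep : ∃ u v : Fin 4 → F,
      (∑ i, u i ^ 2) = b₁ ∧ (∑ i, v i ^ 2) = b₂ ∧ (∑ i, u i * v i) = 0)
    (hG : ∀ N : F, N ≠ 0 → ∃ a b c d : F, Ge ord 0 a ∧ Ge ord 0 b ∧
      b₁ - a ^ 2 - b ^ 2 * b₁ / b₂ = N * (c ^ 2 + b₁ * b₂ * d ^ 2)) :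
    RepByIm {x : F | 0 ≤ ord x} 4 b₁ b₂ := by
  obtain ⟨u, v, hu, hv, huv⟩ := hrep
  rw [Fin.sum_univ_four] at hu hv huv
  obtain ⟨W₁, W₂, W₃, hW⟩ : ∃ W₁ W₂ W₃ : F, W₁ ^ 2 + W₂ ^ 2 + W₃ ^ 2 = b₁ * b₂ := by
    refine ⟨-v 0 * u 1 + v 1 * u 0 - v 2 * u 3 + v 3 * u 2,
      -v 0 * u 2 + v 2 * u 0 - v 3 * u 1 + v 1 * u 3,
      -v 0 * u 3 + v 3 * u 0 - v 1 * u 2 + v 2 * u 1, ?_⟩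
    rw [← hu, ← hv]
    linear_combination -(u 0 * v 0 + u 1 * v 1 + u 2 * v 2 + u 3 * v 3) * huv
  by_cases hJ : W₁ ^ 2 + W₂ ^ 2 = 0
  · have hW1 : W₁ = 0 := by
      by_contra h
      refine hA (W₂ / W₁) 0 ?_
      field_simp
      linear_combination hJ
    subst hW1
    have hW2 : W₂ = 0 := by
      have : W₂ ^ 2 = 0 := by linear_combination hJ
      exact pow_eq_zero_iff (two_ne_zero) |>.1 this
    subst hW2
    refine rep_of_pure H hA (W₁ := W₃) (W₂ := 0) (W₃ := 0) hb₁ hb₂ ?_ ?_ h1 h2 hG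
    · linear_combination hW
    · intro h
      exact mul_ne_zero hb₁ hb₂ (by rw [← hW]; linear_combination h)
  · exact rep_of_pure H hA hb₁ hb₂ hW hJ h1 h2 hG

end anisotropic

/-! ### Norm classes of quadratic extensions -/

section norms

variable {F : Type*} [Field F]

/-- `x` is a value of the norm form `c² - D d²`, i.e. a norm from `F(√D)`. -/
def IsNorm (D x : F) : Prop := ∃ c d : F, x = c ^ 2 - D * d ^ 2

/-- `ν` separates the norm classes of `D`: every nonzero `c` becomes a norm after multiplication
by `1` or by `ν`. This expresses that norms have index at most two in `F^×`. -/
def Sep (D ν : F) : Prop := ∀ c : F, c ≠ 0 → IsNorm D c ∨ IsNorm D (c * ν)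

theorem IsNorm.mul {D x y : F} (hx : IsNorm D x) (hy : IsNorm D y) : IsNorm D (x * y) := by
  obtain ⟨c, d, rfl⟩ := hx
  obtain ⟨c', d', rfl⟩ := hy
  exact ⟨c * c' + D * d * d', c * d' + d * c', by ring⟩

theorem IsNorm.square (D t : F) : IsNorm D (t ^ 2) := ⟨t, 0, by ring⟩

theorem IsNorm.of_mul {D x g : F} (h : IsNorm D (x * g)) (hg : IsNorm D g) (h0 : g ≠ 0) :
    IsNorm D x := by
  have := (h.mul hg).mul (IsNorm.square D g⁻¹)
  have h2 : x * g * g * g⁻¹ ^ 2 = x := by field_simp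
  rwa [h2] at this

variable {ord : F → WithTop ℤ} {e : ℤ} (H : Dyadic ord e)
include H

/-- Every square class of even order contains a unit `1 + μ` with `μ` of odd order below the
prescribed level `n`, or congruent to `1` to that level. -/
theorem exists_defect {m : ℤ} {x : F} (hx : Ex ord (2 * m) x) : ∀ n : ℕ, 1 ≤ n → (n : ℤ) ≤ 2 * e →
    ∃ s μ : F, Ex ord m s ∧ Ge ord 1 μ ∧ x = s ^ 2 * (1 + μ) ∧
      ((∃ d : ℤ, 0 < d ∧ d < n ∧ (∃ j, d = 2 * j + 1) ∧ Ex ord d μ) ∨ Ge ord n μ) := by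
  intro n hn
  induction n, hn using Nat.le_induction with
  | base =>
    intro _
    obtain ⟨s, hs, h⟩ := H.sqapprox hx
    have hs0 := H.ne hs
    have h1 : Ge ord 1 ((x - s ^ 2) / s ^ 2) := H.gdiv h (H.exsq hs) (by omega)
    refine ⟨s, (x - s ^ 2) / s ^ 2, hs, h1, by field_simp; ring, Or.inr ?_⟩
    exact_mod_cast h1
  | succ n hn ih =>
    intro hne
    push_cast at hne
    obtain ⟨s, μ, hs, h1, hxs, h | h⟩ := ih (by omega)
    · obtain ⟨d, hd0, hdn, hj, hd⟩ := h
      exact ⟨s, μ, hs, h1, hxs, Or.inl ⟨d, hd0, by push_cast; omega, hj, hd⟩⟩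
    by_cases h' : Ge ord (n + 1) μ
    · exact ⟨s, μ, hs, h1, hxs, Or.inr (by exact_mod_cast h')⟩
    have hμ := H.ex_of_ge h h'
    rcases Int.even_or_odd' (n : ℤ) with ⟨k, hk | hk⟩
    · obtain ⟨t, ht, h2⟩ := H.sqapprox (hμ.of hk)
      have hk1 : 1 ≤ k := by omega
      have hu : Ex ord 0 (1 + t) := H.exadd H.exone (ht.ge.mono (by omega))
      have hu0 := H.ne hu
      have h3 : Ge ord (n + 1) ((μ - t ^ 2 - 2 * t) / (1 + t) ^ 2) := by
        refine H.gdiv (H.gsub (h2.mono (by omega)) (H.gtwo ht.ge (k := n + 1) (by omega)))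
          (H.exsq hu) (by omega)
      refine ⟨s * (1 + t), (μ - t ^ 2 - 2 * t) / (1 + t) ^ 2, (H.exmul hs hu).of (by omega),
        h3.mono (by omega), ?_, Or.inr (by exact_mod_cast h3)⟩
      rw [hxs]
      field_simp
      ring
    · exact ⟨s, μ, hs, h1, hxs, Or.inl ⟨n, by omega, by push_cast; omega, ⟨k, hk⟩, hμ⟩⟩

/-- Local squares: `1 + 4𝔭` consists of squares. -/
theorem isNorm_of_close {D c : F} (h : Ge ord (2 * e + 1) (c - 1)) : IsNorm D c := by
  obtain ⟨z, _, hz⟩ := H.hensel ((c - 1) / 4) (H.gdiv h H.gfour (by omega))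
  have h4 := H.ne H.gfour
  have : c = (1 + 2 * z) ^ 2 := by
    field_simp at hz
    linear_combination -hz
  rw [this]
  exact IsNorm.square _ _

/-- Even levels below `2e` of the unit filtration are covered by squares. -/
theorem isNorm_even_level {D x : F} {i : ℤ} (hi : 1 ≤ i) (hi' : i < 2 * e) (hev : ∃ k, i = 2 * k)
    (hx : Ex ord i x) : ∃ g, IsNorm D g ∧ Ge ord (i + 1) (1 + x - g) := by
  obtain ⟨k, rfl⟩ := hev
  obtain ⟨t, ht, h⟩ := H.sqapprox hx
  refine ⟨(1 + t) ^ 2, IsNorm.square _ _, ?_⟩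
  have : 1 + x - (1 + t) ^ 2 = (x - t ^ 2) - 2 * t := by ring
  rw [this]
  exact H.gsub h (H.gtwo ht.ge (by omega))

/-- Descent along the unit filtration. Norms cover each graded piece except the one at level `i₀`,
where they cover the image of `τ ↦ θ (τ² + τ)`, of index two; `ν ≈ 1 + θ` represents the
missing class. -/
theorem sep_of_levels (hz : ¬ ∃ z : F, Ge ord 0 z ∧ Ge ord 1 (z ^ 2 + z + 1))
    {D θ ν : F} {i₀ : ℤ} (hi₀ : 1 ≤ i₀)
    (ho : ∃ g k, IsNorm D g ∧ Ex ord (2 * k + 1) g)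
    (hl : ∀ i x, 1 ≤ i → i ≤ 2 * e → i ≠ i₀ → Ex ord i x →
      ∃ g, IsNorm D g ∧ Ge ord (i + 1) (1 + x - g))
    (hθ : Ex ord i₀ θ)
    (hc : ∀ τ, Ge ord 0 τ → ∃ g, IsNorm D g ∧ Ge ord (i₀ + 1) (g - 1 - θ * (τ ^ 2 + τ)))
    (hν : Ge ord (i₀ + 1) (ν - 1 - θ)) : Sep D ν := by
  have hνu : Ex ord 0 ν := by
    have := H.exadd H.exone (H.gadd (hθ.ge.mono (by omega)) (hν.mono (by omega)) : Ge ord (0 + 1) _)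
    convert this using 1
    ring
  have key : ∀ k : ℕ, ∀ c : F, 1 ≤ 2 * e + 1 - k → Ge ord (2 * e + 1 - k) (c - 1) →
      IsNorm D c ∨ IsNorm D (c * ν) := by
    intro k
    induction k with
    | zero =>
      intro c _ h
      left
      exact isNorm_of_close H (h.mono (by simp))
    | succ k ih =>
      intro c hk h
      push_cast at hk h
      by_cases h' : Ge ord (2 * e + 1 - k) (c - 1)
      · exact ih c (by omega) h'
      have hx : Ex ord (2 * e + 1 - (k + 1)) (c - 1) :=
        H.ex_of_ge h (fun hh => h' (hh.mono (by omega)))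
      have hcu : Ex ord 0 c := by
        have := H.exadd H.exone (h.mono (by omega) : Ge ord (0 + 1) _)
        convert this using 1
        ring
      have step : ∀ w g : F, Ex ord 0 w → IsNorm D g → Ge ord (2 * e + 1 - k) (w - g) →
          IsNorm D w ∨ IsNorm D (w * ν) := by
        intro w g hw hg hwg
        have hgu : Ex ord 0 g := by
          have := H.exsub hw (hwg.mono (by omega) : Ge ord (0 + 1) _)
          convert this using 1
          ring
        have hg0 := H.ne hgu
        have h1 : Ge ord (2 * e + 1 - k) (w / g - 1) := by
          have := H.gdiv hwg hgu (k := 2 * e + 1 - k) (by omega)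
          convert this using 1
          field_simp
        refine (ih (w / g) (by omega) h1).imp (fun h => ?_) fun h => ?_
        · have := h.mul hg
          rwa [div_mul_cancel₀ _ hg0] at this
        · have := h.mul hg
          convert this using 1
          field_simp
      by_cases hi : 2 * e + 1 - ((k : ℤ) + 1) = i₀
      · obtain ⟨z, hz0, hz1⟩ := H.as hz ((c - 1) / θ) (H.gdiv h hθ (by omega))
        obtain ⟨g, hg, hgz⟩ := hc z hz0
        have hθ0 := H.ne hθ
        rcases hz1 with hz1 | hz1
        · refine step c g hcu hg ?_
          have h2 := H.gsub (H.gmul hθ.ge hz1 (k := i₀ + 1) (by omega)) hgz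
          refine Ge.mono (n := i₀ + 1) ?_ (by omega)
          convert h2 using 1
          field_simp
          ring
        · have h3 : IsNorm D (c * ν) ∨ IsNorm D (c * ν * ν) := by
            refine step (c * ν) g ((H.exmul hcu hνu).of (by omega)) hg ?_
            have h2 := H.gsub (H.gmul hθ.ge hz1 (k := i₀ + 1) (by omega)) hgz
            have h4 : Ge ord (i₀ + 1) ((c - 1) * θ) := H.gmul h hθ.ge (by omega)
            have h5 : Ge ord (i₀ + 1) (c * (ν - 1 - θ)) := H.gmul hcu.ge hν (by omega)
            have h6 := H.gadd (H.gadd h2 h4) h5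
            refine Ge.mono (n := i₀ + 1) ?_ (by omega)
            convert h6 using 1
            field_simp
            ring
          rcases h3 with h3 | h3
          · exact Or.inr h3
          · left
            refine IsNorm.of_mul (g := ν ^ 2) ?_ (IsNorm.square _ _) (pow_ne_zero 2 (H.ne hνu))
            convert h3 using 1
            ring
      · obtain ⟨g, hg, hgx⟩ := hl _ _ (by omega) (by omega) hi hx
        refine step c g hcu hg ?_
        rw [add_sub_cancel] at hgx
        exact hgx.mono (by omega)
  have even : ∀ c : F, ∀ n, Ex ord (2 * n) c → IsNorm D c ∨ IsNorm D (c * ν) := by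
    intro c n hcn
    obtain ⟨t, ht, h⟩ := H.sqapprox hcn
    have ht0 := H.ne ht
    have h1 : Ge ord 1 (c / t ^ 2 - 1) := by
      have := H.gdiv h (H.exsq ht) (k := 1) (by omega)
      convert this using 1
      field_simp
    have he := H.epos
    obtain ⟨k, hk⟩ : ∃ k : ℕ, (k : ℤ) = 2 * e := ⟨(2 * e).toNat, by omega⟩
    refine (key k (c / t ^ 2) (by omega) (h1.mono (by omega))).imp (fun h => ?_) fun h => ?_
    · have := h.mul (IsNorm.square D t)
      rwa [div_mul_cancel₀ _ (pow_ne_zero 2 ht0)] at this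
    · have := h.mul (IsNorm.square D t)
      convert this using 1
      field_simp
  intro c hc0
  obtain ⟨n, hn⟩ := H.ex hc0
  rcases Int.even_or_odd' n with ⟨k, rfl | rfl⟩
  · exact even c k hn
  · obtain ⟨g, j, hg, hgo⟩ := ho
    refine (even (c * g) (k + j + 1) ((H.exmul hn hgo).of (by ring))).imp (fun h => ?_) fun h => ?_
    · exact h.of_mul hg (H.ne hgo)
    · refine IsNorm.of_mul (g := g) ?_ hg (H.ne hgo)
      convert h using 1
      ring

/-- Norm classes for `D` of odd order. -/
theorem sep_of_odd (hz : ¬ ∃ z : F, Ge ord 0 z ∧ Ge ord 1 (z ^ 2 + z + 1))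
    {D ν : F} {k : ℤ} (hD : Ex ord (2 * k + 1) D) (hν : Ge ord (2 * e + 1) (ν - 1 - 4)) :
    Sep D ν := by
  have he := H.epos
  have hD0 := H.ne hD
  refine sep_of_levels H hz (i₀ := 2 * e) (θ := 4) (by omega)
    ⟨-D, k, ⟨0, 1, by ring⟩, H.exneg hD⟩ ?_ H.gfour ?_ hν
  · intro i x hi hi' hne hx
    rcases Int.even_or_odd' i with ⟨j, rfl | rfl⟩
    · exact isNorm_even_level H hi (by omega) ⟨j, rfl⟩ hx
    · obtain ⟨t, ht, h⟩ := H.sqapprox (n := j - k)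
        ((H.exneg (H.exdiv hx hD)).of (by ring) : Ex ord (2 * (j - k)) (-(x / D)))
      refine ⟨1 - D * t ^ 2, ⟨1, t, by ring⟩, ?_⟩
      have := H.gneg (H.gmul hD.ge h (k := 2 * j + 1 + 1) (by omega))
      convert this using 1
      field_simp
      ring
  · intro τ _
    refine ⟨(1 + 2 * τ) ^ 2, IsNorm.square _ _, ?_⟩
    have : (1 + 2 * τ) ^ 2 - 1 - 4 * (τ ^ 2 + τ) = 0 := by ring
    rw [this]
    exact H.zero _

/-- Norm classes for `D` a square times `1 + μ`, with `μ` of odd order `d < 2e`. -/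
theorem sep_of_defect (hz : ¬ ∃ z : F, Ge ord 0 z ∧ Ge ord 1 (z ^ 2 + z + 1))
    {D ν σ μ : F} {d k : ℤ} (hD : D = σ ^ 2 * (1 + μ)) (hσ : σ ≠ 0) (hd0 : 0 < d) (hd : d < 2 * e)
    (hdk : d = 2 * k + 1) (hμ : Ex ord d μ)
    (hν : Ge ord (2 * e - d + 1) (ν - 1 - 4 / μ)) : Sep D ν := by
  have he := H.epos
  have hμ0 := H.ne hμ
  have hN : ∀ t : F, IsNorm D (1 + 2 * t - μ * t ^ 2) := by
    intro t
    refine ⟨1 + t, t / σ, ?_⟩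
    rw [hD]
    field_simp
    ring
  refine sep_of_levels H hz (i₀ := 2 * e - d) (θ := 4 / μ) (by omega)
    ⟨-μ, k, ⟨1, 1 / σ, by rw [hD]; field_simp; ring⟩, (H.exneg hμ).of hdk⟩ ?_
    (H.exdiv H.gfour hμ) ?_ hν
  · intro i x hi hi' hne hx
    by_cases hlt : i < 2 * e - d
    · rcases Int.even_or_odd' i with ⟨j, rfl | rfl⟩
      · exact isNorm_even_level H hi (by omega) ⟨j, rfl⟩ hx
      · obtain ⟨t, ht, h⟩ := H.sqapprox (n := j - k)
          ((H.exneg (H.exdiv hx hμ)).of (by omega) : Ex ord (2 * (j - k)) (-(x / μ)))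
        refine ⟨_, hN t, ?_⟩
        have := H.gsub (H.gneg (H.gmul hμ.ge h (k := 2 * j + 1 + 1) (by omega)))
          (H.gtwo ht.ge (k := 2 * j + 1 + 1) (by omega))
        convert this using 1
        field_simp
        ring
    · have ht : Ex ord (i - e) (x / 2) := H.exdiv hx H.extwo
      have h20 := H.two_ne
      refine ⟨_, hN (x / 2), ?_⟩
      have := H.gmul hμ.ge (H.gsq ht.ge (k := 2 * (i - e)) le_rfl) (k := i + 1) (by omega)
      convert this using 1
      field_simp
      ring
  · intro τ hτ
    refine ⟨_, hN (-(2 / μ) * τ), ?_⟩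
    have h1 : Ge ord 0 (τ ^ 2 + τ) := H.gadd (H.gsq hτ (by omega)) hτ
    have := H.gneg (H.gtwo (H.gmul (H.exdiv H.gfour hμ).ge h1 (k := 2 * e - d) (by omega))
      (k := 2 * e - d + 1) (by omega))
    convert this using 1
    field_simp
    ring

/-- If `D` is a square times `1 + 4ρ` with `ρ` integral, all elements of even order are norms. -/
theorem isNorm_of_unramified {D c σ ρ : F} {n : ℤ} (hD : D = σ ^ 2 * (1 + 4 * ρ)) (hσ : σ ≠ 0)
    (hρ : Ge ord 0 ρ) (hc : Ex ord (2 * n) c) : IsNorm D c := by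
  obtain ⟨t, ht, h⟩ := H.sqapprox hc
  have ht0 := H.ne ht
  have h20 := H.two_ne
  have h1 : Ge ord 1 ((c - t ^ 2) / t ^ 2) := H.gdiv h (H.exsq ht) (by omega)
  obtain ⟨z, hz, hzz⟩ := H.hensel (-(ρ * ((c - t ^ 2) / t ^ 2)))
    (H.gneg (H.gmul hρ h1 (by omega)))
  have hu0 := H.ne (H.exadd H.exone (hz : Ge ord (0 + 1) z))
  set y := (c - t ^ 2) / t ^ 2 / (1 + z) with hy
  have hcy : c = t ^ 2 * (1 + y - ρ * y ^ 2) := by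
    have e1 : (c - t ^ 2) / t ^ 2 = y * (1 + z) := by rw [hy]; field_simp
    have e2 : c = t ^ 2 * (1 + (c - t ^ 2) / t ^ 2) := by field_simp; ring
    have e3 : z = -(ρ * y) := by
      rw [e1] at hzz
      refine mul_right_cancel₀ hu0 ?_
      linear_combination hzz
    rw [e2, e1]
    linear_combination t ^ 2 * y * e3
  refine ⟨t * (1 + y / 2), t * y / 2 / σ, ?_⟩
  rw [hD, hcy]
  field_simp
  ring

end norms

/-! ### Solving the norm equation -/

section normEquation

variable {F : Type*} [Field F]

/-- Solvability, for every `N`, of the norm equation to which the anisotropic case was reduced. -/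
def NormSolvable (ord : F → WithTop ℤ) (b₁ b₂ : F) : Prop :=
  ∀ N : F, N ≠ 0 → ∃ a b c d : F, Ge ord 0 a ∧ Ge ord 0 b ∧
    b₁ - a ^ 2 - b ^ 2 * b₁ / b₂ = N * (c ^ 2 + b₁ * b₂ * d ^ 2)

/-- Two values of `b₁ - a² - b² b₁ / b₂` whose ratio separates the norm classes suffice. -/
theorem normSolvable_of_sep {ord : F → WithTop ℤ} {b₁ b₂ a b a' b' f ν : F}
    (ha : Ge ord 0 a) (hb : Ge ord 0 b) (ha' : Ge ord 0 a') (hb' : Ge ord 0 b') (hf0 : f ≠ 0)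
    (hf : b₁ - a ^ 2 - b ^ 2 * b₁ / b₂ = f)
    (hf' : b₁ - a' ^ 2 - b' ^ 2 * b₁ / b₂ = f * ν) (hS : Sep (-(b₁ * b₂)) ν) :
    NormSolvable ord b₁ b₂ := by
  intro N hN
  rcases hS (f / N) (div_ne_zero hf0 hN) with ⟨c, d, h⟩ | ⟨c, d, h⟩
  · refine ⟨a, b, c, d, ha, hb, ?_⟩
    rw [hf]
    field_simp at h
    linear_combination h
  · refine ⟨a', b', c, d, ha', hb', ?_⟩
    rw [hf']
    field_simp at h
    linear_combination h

variable {ord : F → WithTop ℤ} {e : ℤ} (H : Dyadic ord e)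
include H

/-- In the unramified case a value of even order and one of odd order suffice. -/
theorem normSolvable_of_unramified {b₁ b₂ a b a' b' f f' σ ρ : F} {k k' : ℤ}
    (hD : -(b₁ * b₂) = σ ^ 2 * (1 + 4 * ρ)) (hσ : σ ≠ 0) (hρ : Ge ord 0 ρ)
    (ha : Ge ord 0 a) (hb : Ge ord 0 b) (ha' : Ge ord 0 a') (hb' : Ge ord 0 b')
    (hf : b₁ - a ^ 2 - b ^ 2 * b₁ / b₂ = f) (hk : Ex ord (2 * k) f)
    (hf' : b₁ - a' ^ 2 - b' ^ 2 * b₁ / b₂ = f') (hk' : Ex ord (2 * k' + 1) f') :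
    NormSolvable ord b₁ b₂ := by
  intro N hN
  obtain ⟨n, hn⟩ := H.ex hN
  rcases Int.even_or_odd' n with ⟨j, rfl | rfl⟩
  · obtain ⟨c, d, h⟩ := isNorm_of_unramified H hD hσ hρ (c := f / N) (n := k - j)
      ((H.exdiv hk hn).of (by ring))
    refine ⟨a, b, c, d, ha, hb, ?_⟩
    rw [hf]
    field_simp at h
    linear_combination h
  · obtain ⟨c, d, h⟩ := isNorm_of_unramified H hD hσ hρ (c := f' / N) (n := k' - j)
      ((H.exdiv hk' hn).of (by ring))
    refine ⟨a', b', c, d, ha', hb', ?_⟩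
    rw [hf']
    field_simp at h
    linear_combination h

variable {b₁ b₂ : F} {S₁ S₂ : ℤ} (h1 : Ex ord S₁ b₁) (h2 : Ex ord S₂ b₂) (h0 : 0 ≤ S₁)
  (hle : S₁ ≤ S₂)
include h1 h2 h0 hle

/-- The case `-b₁b₂ ∈ σ²(1 + 4O)`: a value of odd order is `b₁` itself, `b₁ - s²`, or
`(b₂ - σ₂²) b₁ / b₂` with `-b₂ = σ₂²(1 + μ₂)`; the last has order congruent to `e` modulo `2`. -/
theorem normSolvable_of_small_defect {σ μ : F} {k : ℤ} (hee : ∃ f, e = 2 * f + 1)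
    (heven : S₁ + S₂ = 2 * k) (hσ : Ex ord k σ)
    (hD : -(b₁ * b₂) = σ ^ 2 * (1 + μ)) (hμ : Ge ord (2 * e) μ) : NormSolvable ord b₁ b₂ := by
  have he := H.epos
  have hb₁ := H.ne h1
  have hb₂ := H.ne h2
  have hσ0 := H.ne hσ
  have g0 := H.zero 0
  have h40 := H.ne H.gfour
  have hρ : Ge ord 0 (μ / 4) := H.gdiv hμ H.gfour (by omega)
  have hD' : -(b₁ * b₂) = σ ^ 2 * (1 + 4 * (μ / 4)) := by rw [hD]; field_simp
  rcases Int.even_or_odd' S₁ with ⟨m, hm | hm⟩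
  swap
  · have h3 : Ex ord (2 * 0) (b₁ - 1) := by
      rw [sub_eq_add_neg]
      exact H.exadd' (h1.ge.mono (by omega)) H.exnegone
    exact normSolvable_of_unramified H hD' hσ0 hρ H.gone g0 g0 g0 (by ring) h3
      (by ring) (h1.of hm)
  obtain ⟨s, μ₁, hs, hμ₁, hbs, hcase⟩ :=
    exists_defect H (h1.of hm) (2 * e).toNat (by omega) (by omega)
  rw [show ((2 * e).toNat : ℤ) = 2 * e by omega] at hcase
  have hs0 := H.ne hs
  have h1μ₁ : Ex ord 0 (1 + μ₁) := H.exadd H.exone hμ₁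
  have h1μ₁0 := H.ne h1μ₁
  rcases hcase with ⟨l, hl0, hld, ⟨i, hli⟩, hl⟩ | hge
  · exact normSolvable_of_unramified H hD' hσ0 hρ g0 g0 (hs.ge.mono (by omega)) g0 (by ring)
      (h1.of hm) (f' := s ^ 2 * μ₁) (k' := m + i) (by rw [hbs]; ring)
      ((H.exmul (H.exsq hs) hl).of (by omega))
  · obtain ⟨f, hf⟩ := hee
    have h4 : Ex ord (k - m) (σ / s) := H.exdiv hσ hs
    have hμ₂ : Ge ord (2 * e) ((μ - μ₁) / (1 + μ₁)) := H.gdiv (H.gsub hμ hge) h1μ₁ (by omega)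
    set σ₂ := σ / s with hσ₂
    set μ₂ := (μ - μ₁) / (1 + μ₁) with hμ₂d
    have hb₂s : b₂ = -(σ₂ ^ 2 * (1 + μ₂)) := by
      refine mul_left_cancel₀ hb₁ ?_
      rw [show b₁ * b₂ = -(σ ^ 2 * (1 + μ)) by linear_combination -hD, hbs, hσ₂, hμ₂d]
      field_simp
      ring
    have h2μ : Ex ord e (2 + μ₂) := H.exadd H.extwo (hμ₂.mono (by omega))
    refine normSolvable_of_unramified H hD' hσ0 hρ g0 g0 g0 (h4.ge.mono (by omega)) (by ring)
      (h1.of hm) (f' := (b₂ - σ₂ ^ 2) * b₁ / b₂) (k' := f + m) (by field_simp; ring) ?_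
    have e1 : b₂ - σ₂ ^ 2 = -(σ₂ ^ 2 * (2 + μ₂)) := by rw [hb₂s]; ring
    rw [e1]
    exact (H.exdiv (H.exmul (H.exneg (H.exmul (H.exsq h4) h2μ)) h1) h2).of (by omega)

variable (hz : ¬ ∃ z : F, Ge ord 0 z ∧ Ge ord 1 (z ^ 2 + z + 1))
include hz

/-- The case of `b₁b₂` of odd order. -/
theorem normSolvable_of_odd {k : ℤ} (hodd : S₁ + S₂ = 2 * k + 1) : NormSolvable ord b₁ b₂ := by
  have he := H.epos
  have hb₁ := H.ne h1
  have hb₂ := H.ne h2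
  have hD : Ex ord (2 * k + 1) (-(b₁ * b₂)) := (H.exneg (H.exmul h1 h2)).of hodd
  have g0 := H.zero 0
  rcases Int.even_or_odd' S₁ with ⟨m, hm | hm⟩
  · obtain ⟨a, ha, h⟩ := H.sqapprox (n := e + m)
      ((H.exneg (H.exmul H.gfour h1)).of (by omega) : Ex ord (2 * (e + m)) (-(4 * b₁)))
    refine normSolvable_of_sep g0 g0 (ha.ge.mono (by omega)) g0 hb₁
      (by ring) (ν := 1 - a ^ 2 / b₁) (by field_simp; ring) (sep_of_odd H hz hD ?_)
    have := H.gdiv h h1 (k := 2 * e + 1) (by omega)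
    convert this using 1
    field_simp
    ring
  · obtain ⟨b, hb, h⟩ := H.sqapprox (n := e + (k - m))
      ((H.exneg (H.exmul H.gfour h2)).of (by omega) : Ex ord (2 * (e + (k - m))) (-(4 * b₂)))
    refine normSolvable_of_sep g0 g0 g0 (hb.ge.mono (by omega)) hb₁
      (by ring) (ν := 1 - b ^ 2 / b₂) (by field_simp; ring) (sep_of_odd H hz hD ?_)
    have := H.gdiv h h2 (k := 2 * e + 1) (by omega)
    convert this using 1
    field_simp
    ring

/-- The case `-b₁b₂ = σ²(1 + μ)` with `μ` of odd order `d < 2e`. Here the ratio of the two values has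
to be `≈ 1 + 4/μ`; the two points depend on the parity of `ord b₁`, on whether `d ≤ e`, and on the
defect of `b₁`. -/
theorem normSolvable_of_defect {σ μ : F} {d j k : ℤ} (hee : ∃ f, e = 2 * f + 1)
    (heven : S₁ + S₂ = 2 * k) (hσ : Ex ord k σ)
    (hD : -(b₁ * b₂) = σ ^ 2 * (1 + μ)) (hd0 : 0 < d) (hd : d < 2 * e) (hdj : d = 2 * j + 1)
    (hμ : Ex ord d μ) : NormSolvable ord b₁ b₂ := by
  have he := H.epos
  have hb₁ := H.ne h1
  have hb₂ := H.ne h2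
  have hμ0 := H.ne hμ
  have hσ0 := H.ne hσ
  have g0 := H.zero 0
  have h20 := H.two_ne
  have h1μ : Ex ord 0 (1 + μ) := H.exadd H.exone (hμ.ge.mono (by omega))
  have sep : ∀ ν, Ge ord (2 * e - d + 1) (ν - 1 - 4 / μ) → Sep (-(b₁ * b₂)) ν :=
    fun ν h => sep_of_defect H hz hD hσ0 hd0 hd hdj hμ h
  rcases Int.even_or_odd' S₁ with ⟨m, hm | hm⟩
  swap
  · obtain ⟨a, ha, h⟩ := H.sqapprox (n := e + m - j)
      ((H.exneg (H.exdiv (H.exmul H.gfour h1) hμ)).of (by omega) :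
        Ex ord (2 * (e + m - j)) (-(4 * b₁ / μ)))
    refine normSolvable_of_sep g0 g0 (ha.ge.mono (by omega)) g0 hb₁
      (by ring) (ν := 1 - a ^ 2 / b₁) (by field_simp; ring) (sep _ ?_)
    have := H.gdiv h h1 (k := 2 * e - d + 1) (by omega)
    convert this using 1
    field_simp
    ring
  -- here `b` is chosen so that `b₁ - a² - b² b₁ / b₂ = b₁ + μ a²`
  by_cases hde : d ≤ e
  · obtain ⟨a, ha, h⟩ := H.sqapprox (n := e + m - d)
      ((H.exdiv (H.exmul H.gfour h1) (H.exsq hμ)).of (by omega) :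
        Ex ord (2 * (e + m - d)) (4 * b₁ / μ ^ 2))
    have hb : Ex ord (e + m - d + k - S₁) (a * σ * (1 + μ) / b₁) :=
      (H.exdiv (H.exmul (H.exmul ha hσ) h1μ) h1).of (by omega)
    refine normSolvable_of_sep g0 g0 (a' := a) (b' := a * σ * (1 + μ) / b₁)
      (ha.ge.mono (by omega)) (hb.ge.mono (by omega)) hb₁
      (by ring) (ν := 1 + μ * a ^ 2 / b₁) ?_ (sep _ ?_)
    · field_simp
      linear_combination a ^ 2 * (1 + μ) * hD
    · have := H.gneg (H.gdiv (H.gmul hμ.ge h (k := d + 2 * (e + m - d) + 1) (by omega)) h1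
        (k := 2 * e - d + 1) (by omega))
      convert this using 1
      field_simp
      ring
  obtain ⟨s, μ₁, hs, hμ₁, hbs, hcase⟩ :=
    exists_defect H (h1.of hm) d.toNat (by omega) (by omega)
  rw [show (d.toNat : ℤ) = d by omega] at hcase
  have hs0 := H.ne hs
  have h1μ₁ : Ex ord 0 (1 + μ₁) := H.exadd H.exone hμ₁
  have h1μ₁0 := H.ne h1μ₁
  rcases hcase with ⟨l, hl0, hld, ⟨i, hli⟩, hl⟩ | hge
  · have hμ₁0 := H.ne hl
    obtain ⟨η, hη, h⟩ := H.sqapprox (n := e + i - j)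
      ((H.exneg (H.exdiv (H.exmul H.gfour hl) hμ)).of (by omega) :
        Ex ord (2 * (e + i - j)) (-(4 * μ₁ / μ)))
    have h1η : Ge ord 0 (1 + η) := H.gadd H.gone (hη.ge.mono (by omega))
    refine normSolvable_of_sep (a := s) (a' := s * (1 + η)) (hs.ge.mono (by omega)) g0
      (H.gmul hs.ge h1η (by omega)) g0 (f := s ^ 2 * μ₁)
      (ν := 1 - (2 * η + η ^ 2) / μ₁) (mul_ne_zero (pow_ne_zero 2 hs0) hμ₁0)
      (by rw [hbs]; ring) (by rw [hbs]; field_simp; ring) (sep _ ?_)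
    have := H.gsub (H.gdiv h hl (k := 2 * e - d + 1) (by omega))
      (H.gdiv (H.gtwo hη.ge (k := e + (e + i - j)) (by omega)) hl (k := 2 * e - d + 1) (by omega))
    convert this using 1
    field_simp
    ring
  · obtain ⟨f, hf⟩ := hee
    have h4 : Ex ord (k - m) (σ / s) := H.exdiv hσ hs
    have h40 := H.ne h4
    have hμ₂ : Ge ord d ((μ - μ₁) / (1 + μ₁)) := H.gdiv (H.gsub hμ.ge hge) h1μ₁ (by omega)
    set σ₂ := σ / s with hσ₂
    set μ₂ := (μ - μ₁) / (1 + μ₁) with hμ₂d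
    have hb₂s : b₂ = -(σ₂ ^ 2 * (1 + μ₂)) := by
      refine mul_left_cancel₀ hb₁ ?_
      rw [show b₁ * b₂ = -(σ ^ 2 * (1 + μ)) by linear_combination -hD, hbs, hσ₂, hμ₂d]
      field_simp
      ring
    have h2μ : Ex ord e (2 + μ₂) := H.exadd H.extwo (hμ₂.mono (by omega))
    have h2μ0 := H.ne h2μ
    have h1μ₂ : 1 + μ₂ ≠ 0 := H.ne (H.exadd H.exone (hμ₂.mono (by omega)))
    -- `e` and `d` are odd, so `8/μ` has even order; as `d > e`, `η²` dominates `2η`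
    obtain ⟨η, hη, h⟩ := H.sqapprox (n := 3 * f + 1 - j)
      ((H.exdiv (H.exmul H.gfour H.extwo) hμ).of (by omega) :
        Ex ord (2 * (3 * f + 1 - j)) (4 * 2 / μ))
    have h1η : Ge ord 0 (1 + η) := H.gadd H.gone (hη.ge.mono (by omega))
    refine normSolvable_of_sep (b := σ₂) (b' := σ₂ * (1 + η)) g0 (h4.ge.mono (by omega)) g0
      (H.gmul h4.ge h1η (by omega)) (f := -(σ₂ ^ 2 * (2 + μ₂)) * b₁ / b₂)
      (ν := 1 + (2 * η + η ^ 2) / (2 + μ₂))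
      (div_ne_zero (mul_ne_zero (neg_ne_zero.2 (mul_ne_zero (pow_ne_zero 2 h40) h2μ0)) hb₁) hb₂)
      (by rw [hb₂s]; field_simp; ring) (by rw [hb₂s]; field_simp; ring) (sep _ ?_)
    have e1 := H.gdiv (H.gtwo hη.ge (k := e + (3 * f + 1 - j)) (by omega)) h2μ
      (k := 2 * e - d + 1) (by omega)
    have e2 := H.gdiv h h2μ (k := 2 * e - d + 1) (by omega)
    have e3 := H.gdiv (H.gmul (H.exdiv H.gfour hμ).ge hμ₂ (k := 2 * e) (by omega)) h2μ
      (k := 2 * e - d + 1) (by omega)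
    have := H.gsub (H.gsub e1 e2) e3
    convert this using 1
    field_simp
    ring

theorem normSolvable (hee : ∃ f, e = 2 * f + 1) : NormSolvable ord b₁ b₂ := by
  have he := H.epos
  rcases Int.even_or_odd' (S₁ + S₂) with ⟨k, hk | hk⟩
  swap
  · exact normSolvable_of_odd H h1 h2 h0 hle hz hk
  obtain ⟨σ, μ, hσ, _, hD, hcase⟩ := exists_defect H
    ((H.exneg (H.exmul h1 h2)).of hk) (2 * e).toNat (by omega) (by omega)
  rw [show ((2 * e).toNat : ℤ) = 2 * e by omega] at hcase
  rcases hcase with ⟨d, hd0, hd, ⟨j, hj⟩, hμ⟩ | hμ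
  · exact normSolvable_of_defect H h1 h2 h0 hle hz hee hk hσ hD hd0 hd hj hμ
  · exact normSolvable_of_small_defect H h1 h2 h0 hle hee hk hσ hD hμ

end normEquation

end RepI4

/-- Let `F` be a dyadic local field with valuation ring
`O_F = {x | 0 ≤ ord x}` (the integral closure of `ℤ₂` in `F`), normalized valuation `ord`
and `e = ord 2`.  Let `b₁, b₂ ∈ F^×` with `0 ≤ ord b₁ ≤ ord b₂`.  Then `⟨b₁, b₂⟩` is
represented by `I₄` over `O_F` if and only if both:
(a) the binary quadratic space `[b₁, b₂]` is represented by the quaternary space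
`[1,1,1,1]` over `F`, and (b) `d(-b₁) ≥ e - ord b₁` and `d(-b₁b₂) ≥ e - ord b₂`. -/
theorem rep_by_I4_iff
    (F : Type*) [Field F] [Algebra ℚ_[2] F] [FiniteDimensional ℚ_[2] F]
    [Algebra ℤ_[2] F] [IsScalarTower ℤ_[2] ℚ_[2] F]
    (ord : F → WithTop ℤ)
    (hord_top : ∀ x : F, ord x = ⊤ ↔ x = 0)
    (hord_mul : ∀ x y : F, ord (x * y) = ord x + ord y)
    (hord_add : ∀ x y : F, min (ord x) (ord y) ≤ ord (x + y))
    (hord_surj : ∀ n : ℤ, ∃ x : F, ord x = (n : WithTop ℤ))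
    (hord_int : ∀ x : F, 0 ≤ ord x ↔ IsIntegral ℤ_[2] x)
    (e : ℤ) (he : ord 2 = (e : WithTop ℤ))
    (b₁ b₂ : F) (hb₁ : b₁ ≠ 0) (hb₂ : b₂ ≠ 0)
    (S₁ S₂ : ℤ) (hS₁ : ord b₁ = (S₁ : WithTop ℤ)) (hS₂ : ord b₂ = (S₂ : WithTop ℤ))
    (h0 : 0 ≤ S₁) (hle : S₁ ≤ S₂) :
    RepByIm {x : F | 0 ≤ ord x} 4 b₁ b₂ ↔
      ((∃ u v : Fin 4 → F,
          (∑ i, u i ^ 2) = b₁ ∧ (∑ i, v i ^ 2) = b₂ ∧ (∑ i, u i * v i) = 0) ∧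
        (((e - S₁ : ℤ) : WithTop ℤ) ≤ quadDefect ord (-b₁) ∧
          ((e - S₂ : ℤ) : WithTop ℤ) ≤ quadDefect ord (-(b₁ * b₂)))) := by
  have H0 : RepI4.DyadicVal ord e :=
    ⟨hord_top, hord_mul, hord_add, hord_surj, he, RepI4.e_pos hord_top hord_mul hord_int he⟩
  have H : RepI4.Dyadic ord e := RepI4.dyadic H0 hord_int
  rw [RepI4.defect_iff_sqMod H0 hS₁ hS₂ h0 hle]
  constructor
  · rintro ⟨u, v, hu, hv, h1, h2, h3⟩
    refine ⟨⟨u, v, h1, h2, h3⟩, ?_, ?_⟩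
    · rw [← h1]
      exact RepI4.sqMod_sum H0 hu
    · rw [← h2]
      exact RepI4.sqMod_sum H0 hv
  · rintro ⟨hrep, h1, h2⟩
    by_cases hA : ∃ p q : F, p ^ 2 + q ^ 2 = -1
    · obtain ⟨p, q, hpq⟩ := hA
      exact RepI4.rep_of_neg_one_sum_two_sq H hpq h1 h2
    · have hA : ∀ p q : F, p ^ 2 + q ^ 2 ≠ -1 := fun p q h => hA ⟨p, q, h⟩
      exact RepI4.rep_of_norm_eq H hA hb₁ hb₂ h1 h2 hrep
        (RepI4.normSolvable H hS₁ hS₂ h0 hle (RepI4.no_cube_root H hA) (RepI4.e_odd H hA))
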